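/- Let c be a maximal composition with at least 3 parts. Then c can be written as c = x_0 ⊕ (3) ⊕ x_1 ⊕ (3) ⊕ ⋯ ⊕ (3) ⊕ x_k for some k ≥ 1 and compositions x_0, x_1, …, x_k (possibly empty) such that x_0 ∈ {ε, (4)}, x_k is either ε or of the form (2^s) with s ≥ 1, and for each i with 1 ≤ i ≤ k−1, x_i is either ε, of the form (2^s) with s ≥ 1, or of the form (4^t) with t ≥ 1. -/

import Mathlib

/-- `i` (1-based, with `1 < i < n`) is a peak of the permutation `σ` of `{1,…,n}`
(represented as a permutation of `Fin n`, position `j` (1-based) being index `j-1`). -/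
def IsPeak {n : ℕ} (σ : Equiv.Perm (Fin n)) (i : ℕ) : Prop :=
  ∃ (h₂ : 2 ≤ i) (h₃ : i < n),
    σ ⟨i - 2, by omega⟩ < σ ⟨i - 1, by omega⟩ ∧ σ ⟨i, h₃⟩ < σ ⟨i - 1, by omega⟩

open Classical in
/-- The peak set of a permutation of `{1,…,n}` (as a set of 1-based positions). -/
noncomputable def peakSet {n : ℕ} (σ : Equiv.Perm (Fin n)) : Finset ℕ :=
  (Finset.range n).filter (fun i => IsPeak σ i)

/-- `P(S;n)`: the number of permutations of `{1,…,n}` with peak set `S`. -/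
noncomputable def numPeakSet (n : ℕ) (S : Finset ℕ) : ℕ :=
  Nat.card {σ : Equiv.Perm (Fin n) // peakSet σ = S}

/-- `c` is a composition of `n`: a list of positive integers summing to `n`. -/
def IsComposition (n : ℕ) (c : List ℕ) : Prop :=
  (∀ x ∈ c, 0 < x) ∧ c.sum = n

/-- The set `S(c)` of proper partial sums of the composition `c`. -/
def compPeaks (c : List ℕ) : Finset ℕ :=
  (Finset.range (c.length - 1)).image (fun i => (c.take (i + 1)).sum)

/-- `P(c)`: the number of permutations of `{1,…,|c|}` whose peak set is `S(c)`. -/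
noncomputable def Pcomp (c : List ℕ) : ℕ :=
  numPeakSet c.sum (compPeaks c)

/-- A composition is maximal if `P(b) ≤ P(c)` for every composition `b` of the same size. -/
def IsMaximal (c : List ℕ) : Prop :=
  ∀ b : List ℕ, IsComposition c.sum b → Pcomp b ≤ Pcomp c

/-- `chain3 c k = c 0 ⊕ (3) ⊕ c 1 ⊕ (3) ⊕ ⋯ ⊕ (3) ⊕ c k`. -/
def chain3 (c : ℕ → List ℕ) : ℕ → List ℕ
  | 0 => c 0
  | k + 1 => chain3 c k ++ [3] ++ c (k + 1)


section Part1

/-- kernel of a part of size `m` between peaks of heights `x` and `y` -/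
noncomputable def KK (m : ℕ) (x y : ℝ) : ℝ :=
  ((x + y) ^ (m - 1) - |x - y| ^ (m - 1)) / (2 * ((m - 1).factorial : ℝ))

noncomputable def AA (m : ℕ) (F : ℝ → ℝ) (y : ℝ) : ℝ := ∫ x in (0:ℝ)..1, F x * KK m x y

lemma hd_abs (p : ℕ) (t : ℝ) : HasDerivAt (fun t : ℝ => |t| ^ (p + 2)) ((p + 2) * (t * |t| ^ p)) t := by
  rcases lt_trichotomy t 0 with h | h | h
  · have := (hasDerivAt_abs_neg h).pow (p + 2)
    refine HasDerivAt.congr_deriv this ?_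
    rw [abs_of_neg h]
    push_cast
    simp
    ring
  · subst h
    rw [hasDerivAt_iff_isLittleO]
    simp only [abs_zero, ne_eq, Nat.add_eq_zero_iff, OfNat.ofNat_ne_zero, and_false, not_false_eq_true, zero_pow, sub_zero, zero_mul, mul_zero, smul_zero]
    have h1 : (fun t : ℝ => t ^ (p + 2)) =o[nhds 0] (fun t : ℝ => t) := by
      have := Asymptotics.isLittleO_pow_pow (𝕜 := ℝ) (m := 1) (n := p + 2) (by omega)
      simpa using this
    rw [← Asymptotics.isLittleO_norm_left] at h1 ⊢
    simpa using h1
  · have := (hasDerivAt_abs_pos h).pow (p + 2)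
    refine HasDerivAt.congr_deriv this ?_
    rw [abs_of_pos h]
    push_cast
    simp
    left; ring

lemma hd_tabs (p : ℕ) (t : ℝ) : HasDerivAt (fun t : ℝ => t * |t| ^ (p + 1)) ((p + 2) * |t| ^ (p + 1)) t := by
  rcases lt_trichotomy t 0 with h | h | h
  · have := (hasDerivAt_id t).mul ((hasDerivAt_abs_neg h).pow (p + 1))
    refine HasDerivAt.congr_deriv this ?_
    simp only [id, Pi.pow_apply]
    rw [abs_of_neg h]
    push_cast
    simp
    ring
  · subst h
    rw [hasDerivAt_iff_isLittleO]
    simp only [abs_zero, ne_eq, Nat.add_eq_zero_iff, one_ne_zero, and_false, not_false_eq_true, zero_pow, sub_zero, mul_zero, smul_zero]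
    have h1 : (fun t : ℝ => t ^ (p + 2)) =o[nhds 0] (fun t : ℝ => t) := by
      have := Asymptotics.isLittleO_pow_pow (𝕜 := ℝ) (m := 1) (n := p + 2) (by omega)
      simpa using this
    rw [← Asymptotics.isLittleO_norm_left] at h1 ⊢
    refine h1.congr_left ?_
    intro x
    simp [pow_succ]
    ring
  · have := (hasDerivAt_id t).mul ((hasDerivAt_abs_pos h).pow (p + 1))
    refine HasDerivAt.congr_deriv this ?_
    simp only [id, Pi.pow_apply]
    rw [abs_of_pos h]
    push_cast
    simp
    ring

lemma KK_symm (m : ℕ) (x y : ℝ) : KK m x y = KK m y x := by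
  unfold KK; rw [add_comm, abs_sub_comm]

lemma KK_two (x y : ℝ) : KK 2 x y = min x y := by
  unfold KK
  rcases le_total x y with h | h
  · rw [min_eq_left h, abs_of_nonpos (by linarith)]; simp; ring
  · rw [min_eq_right h, abs_of_nonneg (by linarith)]; simp

lemma KK_one (x y : ℝ) : KK 1 x y = 0 := by simp [KK]

lemma KK_three (x y : ℝ) : KK 3 x y = x * y := by
  unfold KK
  simp; ring

lemma KK_cont (m : ℕ) : Continuous (fun p : ℝ × ℝ => KK m p.1 p.2) := by
  unfold KK; fun_prop

lemma KK_cont1 (m : ℕ) (y : ℝ) : Continuous (fun x : ℝ => KK m x y) := by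
  unfold KK; fun_prop

lemma KK_cont2 (m : ℕ) (x : ℝ) : Continuous (fun y : ℝ => KK m x y) := by
  unfold KK; fun_prop

lemma KK_cont2' (m : ℕ) (x : ℝ) : Continuous (KK m x) := KK_cont2 m x

lemma KK_nonneg (m : ℕ) {x y : ℝ} (hx : 0 ≤ x) (hy : 0 ≤ y) : 0 ≤ KK m x y := by
  unfold KK
  have : |x - y| ^ (m - 1) ≤ (x + y) ^ (m - 1) := by
    apply pow_le_pow_left₀ (abs_nonneg _)
    rw [abs_le]; constructor <;> linarith
  apply div_nonneg (by linarith) (by positivity)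

lemma KK_pos {m : ℕ} (hm : 2 ≤ m) {x y : ℝ} (hx : 0 < x) (hy : 0 < y) : 0 < KK m x y := by
  unfold KK
  have : |x - y| ^ (m - 1) < (x + y) ^ (m - 1) := by
    apply pow_lt_pow_left₀ _ (abs_nonneg _) (by omega)
    rw [abs_lt]; constructor <;> linarith
  apply div_pos (by linarith) (by positivity)

lemma AA_cont (m : ℕ) {F : ℝ → ℝ} (hF : Continuous F) : Continuous (AA m F) := by
  unfold AA
  apply intervalIntegral.continuous_parametric_intervalIntegral_of_continuous'
  have := KK_cont m
  have h2 : Continuous (fun p : ℝ × ℝ => KK m p.2 p.1) := this.comp (continuous_snd.prodMk continuous_fst)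
  exact (hF.comp continuous_snd).mul h2

lemma swap_int (H : ℝ → ℝ → ℝ) (h : Continuous (fun p : ℝ × ℝ => H p.1 p.2)) (a b c d : ℝ) :
    ∫ x in a..b, ∫ y in c..d, H x y = ∫ y in c..d, ∫ x in a..b, H x y := by
  apply MeasureTheory.intervalIntegral_intervalIntegral_swap
  have : MeasureTheory.IntegrableOn (Function.uncurry H) (Set.uIcc a b ×ˢ Set.uIcc c d) (MeasureTheory.volume.prod MeasureTheory.volume) := by
    apply ContinuousOn.integrableOn_compact (isCompact_uIcc.prod isCompact_uIcc)
    exact h.continuousOn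
  exact this.mono_set (Set.prod_mono Set.uIoc_subset_uIcc Set.uIoc_subset_uIcc)

/-- composition of two kernels -/
lemma AA_AA (m n : ℕ) {F : ℝ → ℝ} (hF : Continuous F) (y : ℝ) :
    AA n (AA m F) y = ∫ x in (0:ℝ)..1, F x * AA n (KK m x) y := by
  unfold AA
  simp_rw [← intervalIntegral.integral_mul_const, ← intervalIntegral.integral_const_mul]
  rw [swap_int]
  · simp_rw [mul_assoc]
  · have h1 := KK_cont m
    have h2 := KK_cont1 n y
    exact ((hF.comp continuous_snd).mul (h1.comp (continuous_snd.prodMk continuous_fst))).mul (h2.comp continuous_fst)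

/-- Green function identity -/
lemma green {F G g : ℝ → ℝ} (hF : Continuous F) (hg : ∀ z, HasDerivAt g (G z) z)
    (hG : ∀ z, HasDerivAt G (F z) z) {x : ℝ} (hx0 : 0 ≤ x) (hx1 : x ≤ 1) :
    ∫ z in (0:ℝ)..1, min x z * F z = x * G 1 - g x + g 0 := by
  have hc : Continuous (fun z => min x z * F z) := by fun_prop
  rw [← intervalIntegral.integral_add_adjacent_intervals (b := x) (hc.intervalIntegrable _ _) (hc.intervalIntegrable _ _)]
  have e1 : ∫ z in (0:ℝ)..x, min x z * F z = ∫ z in (0:ℝ)..x, z * F z := by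
    apply intervalIntegral.integral_congr
    intro z hz
    rw [Set.uIcc_of_le hx0] at hz
    simp [hz.2]
  have e2 : ∫ z in x..1, min x z * F z = ∫ z in x..1, x * F z := by
    apply intervalIntegral.integral_congr
    intro z hz
    rw [Set.uIcc_of_le hx1] at hz
    simp [hz.1]
  rw [e1, e2]
  have d1 : ∀ z ∈ Set.uIcc 0 x, HasDerivAt (fun z => z * G z - g z) (z * F z) z := by
    intro z _
    refine HasDerivAt.congr_deriv (((hasDerivAt_id z).mul (hG z)).sub (hg z)) ?_
    simp
  have d2 : ∀ z ∈ Set.uIcc x 1, HasDerivAt (fun z => x * G z) (x * F z) z := by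
    intro z _
    exact (hG z).const_mul x
  rw [intervalIntegral.integral_eq_sub_of_hasDerivAt d1 ((by fun_prop : Continuous (fun z => z * F z)).intervalIntegrable _ _),
    intervalIntegral.integral_eq_sub_of_hasDerivAt d2 ((by fun_prop : Continuous (fun z => x * F z)).intervalIntegrable _ _)]
  ring

/-- `K_2 K_n` in closed form -/
lemma C2n (n : ℕ) {x y : ℝ} (hx0 : 0 ≤ x) (hx1 : x ≤ 1) (hy0 : 0 ≤ y) (hy1 : y ≤ 1) :
    AA (n + 2) (KK 2 x) y =
      x * (((1 + y) ^ (n + 2) - (1 - y) ^ (n + 2)) / (2 * ((n + 2).factorial : ℝ))) - KK (n + 4) x y := by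
  have key := green (F := fun z => KK (n + 2) z y)
    (G := fun z => ((z + y) ^ (n + 2) - (z - y) * |z - y| ^ (n + 1)) / (2 * ((n + 2).factorial : ℝ)))
    (g := fun z => KK (n + 4) z y) (KK_cont1 _ _) ?_ ?_ hx0 hx1
  · unfold AA
    simp_rw [KK_two]
    rw [key]
    have h0 : KK (n + 4) 0 y = 0 := by
      unfold KK; simp [abs_of_nonneg hy0]
    rw [h0, abs_of_nonneg (by linarith : (0:ℝ) ≤ 1 - y)]
    ring
  · intro z
    have a1 := (hd_abs (n + 1) (z - y)).comp z ((hasDerivAt_id z).sub_const y)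
    have a2 := ((hasDerivAt_id z).add_const y).pow (n + 3)
    have := (a2.sub a1).div_const (2 * ((n + 3).factorial : ℝ))
    unfold KK
    refine HasDerivAt.congr_deriv this ?_
    simp only [id, Nat.factorial_succ (n + 2)]
    push_cast
    have : ((n + 2).factorial : ℝ) ≠ 0 := by positivity
    have h3 : ((n : ℝ) + 2 + 1) ≠ 0 := by positivity
    field_simp
    ring
  · intro z
    have a1 := (hd_tabs n (z - y)).comp z ((hasDerivAt_id z).sub_const y)
    have a2 := ((hasDerivAt_id z).add_const y).pow (n + 2)
    have := (a2.sub a1).div_const (2 * ((n + 2).factorial : ℝ))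
    unfold KK
    refine HasDerivAt.congr_deriv this ?_
    rw [show n + 2 - 1 = n + 1 by omega]
    simp only [id, Nat.factorial_succ (n + 1)]
    push_cast
    have : ((n + 1).factorial : ℝ) ≠ 0 := by positivity
    have h3 : ((n : ℝ) + 1 + 1) ≠ 0 := by positivity
    field_simp
    ring

end Part1

section Part2

structure Gd (F : ℝ → ℝ) : Prop where
  cont : Continuous F
  nonneg : ∀ y ∈ Set.Icc (0:ℝ) 1, 0 ≤ F y
  pos : ∀ y ∈ Set.Ioc (0:ℝ) 1, 0 < F y

def Lt0 (F G : ℝ → ℝ) : Prop :=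
  (∀ y ∈ Set.Icc (0:ℝ) 1, F y ≤ G y) ∧ ∀ y ∈ Set.Ioo (0:ℝ) 1, F y < G y

def Lt1 (F G : ℝ → ℝ) : Prop :=
  (∀ y ∈ Set.Icc (0:ℝ) 1, F y ≤ G y) ∧ ∀ y ∈ Set.Ioc (0:ℝ) 1, F y < G y

lemma Lt1.lt0 {F G : ℝ → ℝ} (h : Lt1 F G) : Lt0 F G :=
  ⟨h.1, fun y hy => h.2 y ⟨hy.1, hy.2.le⟩⟩

lemma int_lt {f g : ℝ → ℝ} (hf : Continuous f) (hg : Continuous g)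
    (h : ∀ x ∈ Set.Ioo (0:ℝ) 1, f x < g x) : ∫ x in (0:ℝ)..1, f x < ∫ x in (0:ℝ)..1, g x := by
  have := intervalIntegral.intervalIntegral_pos_of_pos_on (f := fun x => g x - f x) (a := 0) (b := 1)
    ((hg.sub hf).intervalIntegrable _ _) (fun x hx => by have := h x hx; linarith) (by norm_num)
  rw [intervalIntegral.integral_sub (hg.intervalIntegrable _ _) (hf.intervalIntegrable _ _)] at this
  linarith

lemma int_le {f g : ℝ → ℝ} (hf : Continuous f) (hg : Continuous g)
    (h : ∀ x ∈ Set.Icc (0:ℝ) 1, f x ≤ g x) : ∫ x in (0:ℝ)..1, f x ≤ ∫ x in (0:ℝ)..1, g x :=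
  intervalIntegral.integral_mono_on (by norm_num) (hf.intervalIntegrable _ _) (hg.intervalIntegrable _ _) h

lemma Gd_KK {m : ℕ} (hm : 2 ≤ m) : Gd (KK m 1) :=
  ⟨KK_cont2 m 1, fun _ hy => KK_nonneg m (by norm_num) hy.1, fun _ hy => KK_pos hm (by norm_num) hy.1⟩

lemma Gd_AA {m : ℕ} (hm : 2 ≤ m) {F : ℝ → ℝ} (hF : Gd F) : Gd (AA m F) := by
  refine ⟨AA_cont m hF.cont, fun y hy => ?_, fun y hy => ?_⟩
  · apply intervalIntegral.integral_nonneg (by norm_num)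
    intro x hx
    exact mul_nonneg (hF.nonneg x hx) (KK_nonneg m hx.1 hy.1)
  · have := int_lt (f := fun _ => 0) (g := fun x => F x * KK m x y) continuous_const
      (hF.cont.mul (KK_cont1 m y)) (fun x hx => mul_pos (hF.pos x ⟨hx.1, hx.2.le⟩) (KK_pos hm hx.1 hy.1))
    simpa [AA] using this

lemma AA_mono (m : ℕ) {F G : ℝ → ℝ} (hF : Continuous F) (hG : Continuous G)
    (h : ∀ y ∈ Set.Icc (0:ℝ) 1, F y ≤ G y) : ∀ y ∈ Set.Icc (0:ℝ) 1, AA m F y ≤ AA m G y := by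
  intro y hy
  exact int_le (hF.mul (KK_cont1 m y)) (hG.mul (KK_cont1 m y))
    (fun x hx => mul_le_mul_of_nonneg_right (h x hx) (KK_nonneg m hx.1 hy.1))

lemma AA_lt {m : ℕ} (hm : 2 ≤ m) {F G : ℝ → ℝ} (hF : Continuous F) (hG : Continuous G)
    (h : Lt0 F G) : Lt1 (AA m F) (AA m G) := by
  refine ⟨AA_mono m hF hG h.1, fun y hy => ?_⟩
  exact int_lt (hF.mul (KK_cont1 m y)) (hG.mul (KK_cont1 m y))
    (fun x hx => mul_lt_mul_of_pos_right (h.2 x hx) (KK_pos hm hx.1 hy.1))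

/-- run through the parts `l` starting with density `F` -/
noncomputable def run (F : ℝ → ℝ) (l : List ℕ) : ℝ → ℝ := l.foldl (fun F m => AA m F) F

lemma run_cons (F : ℝ → ℝ) (m : ℕ) (l : List ℕ) : run F (m :: l) = run (AA m F) l := rfl
lemma run_nil (F : ℝ → ℝ) : run F [] = F := rfl
lemma run_append (F : ℝ → ℝ) (l l' : List ℕ) : run F (l ++ l') = run (run F l) l' := by
  simp [run]

lemma run_Gd {l : List ℕ} (hl : ∀ m ∈ l, 2 ≤ m) {F : ℝ → ℝ} (hF : Gd F) : Gd (run F l) := by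
  induction l generalizing F with
  | nil => exact hF
  | cons m l ih =>
    rw [run_cons]
    exact ih (fun m hm => hl m (by simp [hm])) (Gd_AA (hl m (by simp)) hF)

lemma run_lt1 {l : List ℕ} (hl : ∀ m ∈ l, 2 ≤ m) {F G : ℝ → ℝ} (hF : Continuous F) (hG : Continuous G)
    (h : Lt1 F G) : Lt1 (run F l) (run G l) := by
  induction l generalizing F G with
  | nil => exact h
  | cons m l ih =>
    rw [run_cons, run_cons]
    exact ih (fun m hm => hl m (by simp [hm])) (AA_cont m hF) (AA_cont m hG)
      (AA_lt (hl m (by simp)) hF hG h.lt0)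

lemma run_lt0 {l : List ℕ} (hl : ∀ m ∈ l, 2 ≤ m) (hne : l ≠ []) {F G : ℝ → ℝ} (hF : Continuous F)
    (hG : Continuous G) (h : Lt0 F G) : Lt1 (run F l) (run G l) := by
  cases l with
  | nil => exact absurd rfl hne
  | cons m l =>
    rw [run_cons, run_cons]
    exact run_lt1 (fun m hm => hl m (by simp [hm])) (AA_cont m hF) (AA_cont m hG)
      (AA_lt (hl m (by simp)) hF hG h)

lemma C_symm (m n : ℕ) (x y : ℝ) : AA n (KK m x) y = AA m (KK n y) x := by
  unfold AA
  congr 1; ext z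
  rw [KK_symm m x z, KK_symm n z y, mul_comm]

lemma C_cont (m n : ℕ) (y : ℝ) : Continuous (fun x => AA n (KK m x) y) := by
  simp_rw [C_symm m n]
  exact AA_cont m (KK_cont2 n y)

/-- kernel comparison -/
lemma ker_lt {F : ℝ → ℝ} (hF : Gd F) {H1 H2 : ℝ → ℝ → ℝ} (h1 : ∀ y, Continuous (fun x => H1 x y))
    (h2 : ∀ y, Continuous (fun x => H2 x y))
    (hle : ∀ x ∈ Set.Icc (0:ℝ) 1, ∀ y ∈ Set.Icc (0:ℝ) 1, H1 x y ≤ H2 x y)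
    (hlt : ∀ x ∈ Set.Ioo (0:ℝ) 1, ∀ y ∈ Set.Ioc (0:ℝ) 1, H1 x y < H2 x y) :
    Lt1 (fun y => ∫ x in (0:ℝ)..1, F x * H1 x y) (fun y => ∫ x in (0:ℝ)..1, F x * H2 x y) := by
  refine ⟨fun y hy => ?_, fun y hy => ?_⟩
  · exact int_le (hF.cont.mul (h1 y)) (hF.cont.mul (h2 y))
      (fun x hx => mul_le_mul_of_nonneg_left (hle x hx y hy) (hF.nonneg x hx))
  · exact int_lt (hF.cont.mul (h1 y)) (hF.cont.mul (h2 y))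
      (fun x hx => mul_lt_mul_of_pos_left (hlt x hx y hy) (hF.pos x ⟨hx.1, hx.2.le⟩))

/-- end comparison -/
lemma end_lt {F : ℝ → ℝ} (hF : Gd F) {m n m' n' : ℕ}
    (h : Lt0 (AA m (KK n 1)) (AA m' (KK n' 1))) :
    AA n (AA m F) 1 < AA n' (AA m' F) 1 := by
  rw [AA_AA m n hF.cont, AA_AA m' n' hF.cont]
  simp_rw [C_symm m n, C_symm m' n']
  exact int_lt (hF.cont.mul (AA_cont m (KK_cont2 n 1))) (hF.cont.mul (AA_cont m' (KK_cont2 n' 1)))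
      (fun x hx => mul_lt_mul_of_pos_left (h.2 x hx) (hF.pos x ⟨hx.1, hx.2.le⟩))

/-! explicit kernels -/

lemma KK_three' (x : ℝ) : KK 3 x = fun z => x * z := by ext z; exact KK_three x z

lemma AA_smul (m : ℕ) (F : ℝ → ℝ) (a : ℝ) : AA m (fun z => a * F z) = fun y => a * AA m F y := by
  ext y
  unfold AA
  simp_rw [mul_assoc]
  rw [intervalIntegral.integral_const_mul]

lemma AA_congr (m : ℕ) {F G : ℝ → ℝ} (h : ∀ x ∈ Set.Icc (0:ℝ) 1, F x = G x) : AA m F = AA m G := by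
  ext y
  unfold AA
  apply intervalIntegral.integral_congr
  intro x hx
  rw [Set.uIcc_of_le (by norm_num)] at hx
  simp only [h x hx]

lemma AA_three (F : ℝ → ℝ) (y : ℝ) : AA 3 F y = y * ∫ z in (0:ℝ)..1, F z * z := by
  unfold AA
  rw [← intervalIntegral.integral_const_mul]
  congr 1; ext z; rw [KK_three]; ring

noncomputable def kap (m : ℕ) : ℝ → ℝ := AA m (fun z => z)

lemma kap_cont (m : ℕ) : Continuous (kap m) := AA_cont m continuous_id

lemma kap_two_start (m : ℕ) : AA m (KK 2 1) = kap m := by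
  apply AA_congr
  intro x hx
  rw [KK_two, min_eq_right hx.2]

lemma kap_three_start (m : ℕ) : AA m (KK 3 1) = kap m := by
  apply AA_congr
  intro x hx
  rw [KK_three, one_mul]

lemma C3 (m : ℕ) (x y : ℝ) : AA m (KK 3 x) y = x * kap m y := by
  rw [KK_three', AA_smul]; rfl

lemma kap_eq (n : ℕ) {y : ℝ} (hy0 : 0 ≤ y) (hy1 : y ≤ 1) : kap (n + 2) y =
    (((1 + y) ^ (n + 2) - (1 - y) ^ (n + 2)) / (2 * ((n + 2).factorial : ℝ))) - KK (n + 4) 1 y := by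
  rw [← kap_two_start, C2n n (by norm_num) le_rfl hy0 hy1]; ring

lemma KK_one_left (m : ℕ) {y : ℝ} (hy1 : y ≤ 1) :
    KK m 1 y = ((1 + y) ^ (m - 1) - (1 - y) ^ (m - 1)) / (2 * ((m - 1).factorial : ℝ)) := by
  rw [KK, abs_of_nonneg (by linarith)]

lemma kap_2 {y : ℝ} (hy0 : 0 ≤ y) (hy1 : y ≤ 1) : kap 2 y = y / 2 - y ^ 3 / 6 := by
  rw [kap_eq 0 hy0 hy1, KK_one_left _ hy1]; norm_num [Nat.factorial]; ring

lemma kap_3 (y : ℝ) : kap 3 y = y / 3 := by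
  rw [kap, AA_three]
  simp_rw [← pow_two]
  rw [integral_pow]; norm_num; ring

lemma kap_4 {y : ℝ} (hy0 : 0 ≤ y) (hy1 : y ≤ 1) : kap 4 y = y / 8 + y ^ 3 / 12 - y ^ 5 / 120 := by
  rw [kap_eq 2 hy0 hy1, KK_one_left _ hy1]; norm_num [Nat.factorial]; ring

lemma KK4_one {y : ℝ} (hy1 : y ≤ 1) : KK 4 1 y = y / 2 + y ^ 3 / 6 := by
  rw [KK_one_left _ hy1]; norm_num [Nat.factorial]; ring

/-! kernel inequalities -/

lemma pos_Ioc {y : ℝ} (h : y ∈ Set.Ioc (0:ℝ) 1) : y ∈ Set.Icc (0:ℝ) 1 := ⟨h.1.le, h.2⟩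
lemma pos_Ioo {y : ℝ} (h : y ∈ Set.Ioo (0:ℝ) 1) : y ∈ Set.Icc (0:ℝ) 1 := ⟨h.1.le, h.2.le⟩

lemma st22 : Lt1 (AA 2 (KK 2 1)) (KK 4 1) := by
  rw [kap_two_start]
  refine ⟨fun y hy => ?_, fun y hy => ?_⟩
  · rw [kap_2 hy.1 hy.2, KK4_one hy.2]
    have := pow_nonneg hy.1 3; linarith
  · rw [kap_2 hy.1.le hy.2, KK4_one hy.2]
    have := pow_pos hy.1 3; linarith

lemma st23 : Lt0 (AA 3 (KK 2 1)) (AA 2 (KK 3 1)) := by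
  rw [kap_two_start, kap_three_start]
  refine ⟨fun y hy => ?_, fun y hy => ?_⟩
  · rw [kap_2 hy.1 hy.2, kap_3]
    obtain ⟨h0, h1⟩ := hy
    nlinarith [mul_nonneg h0 (sub_nonneg.2 h1), mul_nonneg (mul_nonneg h0 (sub_nonneg.2 h1)) h0]
  · rw [kap_2 hy.1.le hy.2.le, kap_3]
    obtain ⟨h0, h1⟩ := hy
    nlinarith [mul_pos h0 (sub_pos.2 h1), mul_pos (mul_pos h0 (sub_pos.2 h1)) h0]

lemma k4le {y : ℝ} (hy : y ∈ Set.Icc (0:ℝ) 1) : kap 4 y ≤ y / 5 := by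
  rw [kap_4 hy.1 hy.2]
  obtain ⟨h0, h1⟩ := hy
  have e : y / 5 - (y / 8 + y ^ 3 / 12 - y ^ 5 / 120) = y * (1 - y ^ 2) * (9 - y ^ 2) / 120 := by ring
  have : 0 ≤ y * (1 - y ^ 2) * (9 - y ^ 2) / 120 := by
    have : y ^ 2 ≤ 1 := pow_le_one₀ h0 h1
    have a : 0 ≤ 1 - y ^ 2 := by linarith
    have b : 0 ≤ 9 - y ^ 2 := by linarith
    positivity
  linarith

lemma k4lt {y : ℝ} (hy : y ∈ Set.Ioo (0:ℝ) 1) : kap 4 y < y / 5 := by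
  rw [kap_4 hy.1.le hy.2.le]
  obtain ⟨h0, h1⟩ := hy
  have e : y / 5 - (y / 8 + y ^ 3 / 12 - y ^ 5 / 120) = y * (1 - y ^ 2) * (9 - y ^ 2) / 120 := by ring
  have : 0 < y * (1 - y ^ 2) * (9 - y ^ 2) / 120 := by
    have : y ^ 2 < 1 := pow_lt_one₀ h0.le h1 (by norm_num)
    have a : 0 < 1 - y ^ 2 := by linarith
    have b : 0 < 9 - y ^ 2 := by linarith
    positivity
  linarith

lemma AA3_K4 (y : ℝ) : AA 3 (KK 4 1) y = y / 5 := by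
  have := C_symm 4 3 1 y
  rw [this, C3, kap_4 (by norm_num) le_rfl]; ring

lemma st34 : Lt0 (AA 4 (KK 3 1)) (AA 3 (KK 4 1)) := by
  rw [kap_three_start]
  refine ⟨fun y hy => ?_, fun y hy => ?_⟩
  · rw [AA3_K4]; exact k4le hy
  · rw [AA3_K4]; exact k4lt hy

lemma k24 {x y : ℝ} (hx : x ∈ Set.Icc (0:ℝ) 1) (hy : y ∈ Set.Icc (0:ℝ) 1) :
    AA 4 (KK 2 x) y ≤ AA 3 (KK 3 x) y := by
  rw [C2n 2 hx.1 hx.2 hy.1 hy.2, C3, kap_3]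
  have h := KK_nonneg 6 hx.1 hy.1
  have h2 : y ^ 2 ≤ 1 := pow_le_one₀ hy.1 hy.2
  have h3 : 0 ≤ x * y * (1 - y ^ 2) := mul_nonneg (mul_nonneg hx.1 hy.1) (by linarith)
  norm_num [Nat.factorial]
  nlinarith

lemma k24' {x y : ℝ} (hx : x ∈ Set.Ioc (0:ℝ) 1) (hy : y ∈ Set.Ioc (0:ℝ) 1) :
    AA 4 (KK 2 x) y < AA 3 (KK 3 x) y := by
  rw [C2n 2 hx.1.le hx.2 hy.1.le hy.2, C3, kap_3]
  have h := KK_pos (m := 6) (by norm_num) hx.1 hy.1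
  have h2 : y ^ 2 ≤ 1 := pow_le_one₀ hy.1.le hy.2
  have h3 : 0 ≤ x * y * (1 - y ^ 2) := mul_nonneg (mul_nonneg hx.1.le hy.1.le) (by linarith)
  norm_num [Nat.factorial]
  nlinarith

lemma k42 {x y : ℝ} (hx : x ∈ Set.Icc (0:ℝ) 1) (hy : y ∈ Set.Icc (0:ℝ) 1) :
    AA 2 (KK 4 x) y ≤ AA 3 (KK 3 x) y := by
  rw [C_symm, C_symm 3 3]; exact k24 hy hx

lemma k42' {x y : ℝ} (hx : x ∈ Set.Ioc (0:ℝ) 1) (hy : y ∈ Set.Ioc (0:ℝ) 1) :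
    AA 2 (KK 4 x) y < AA 3 (KK 3 x) y := by
  rw [C_symm, C_symm 3 3]; exact k24' hy hx

/-- big parts -/
lemma poly_big (n : ℕ) {y : ℝ} (h0 : 0 ≤ y) (h1 : y ≤ 1) : KK (n + 5) 1 y ≤ kap (n + 3) y := by
  rw [kap_eq (n + 1) h0 h1, KK_one_left _ h1]
  rw [show n + 5 - 1 = n + 4 by omega, show n + 1 + 2 = n + 3 by omega, Nat.factorial_succ (n + 3)]
  set A := (1 + y) ^ (n + 3) with hA
  set B := (1 - y) ^ (n + 3) with hB
  have e1 : (1 + y) ^ (n + 4) = A * (1 + y) := pow_succ _ _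
  have e2 : (1 - y) ^ (n + 4) = B * (1 - y) := pow_succ _ _
  have f : (0:ℝ) < ((n + 3).factorial : ℝ) := by positivity
  have hAB : 0 ≤ (A - B) - y * (A + B) := by
    have : (A - B) - y * (A + B) = (1 - y) * (1 + y) * ((1 + y) ^ (n + 2) - (1 - y) ^ (n + 2)) := by
      rw [hA, hB]; ring
    rw [this]
    apply mul_nonneg (mul_nonneg (by linarith) (by linarith))
    have := pow_le_pow_left₀ (by linarith : 0 ≤ 1 - y) (by linarith : 1 - y ≤ 1 + y) (n + 2)
    linarith
  have hB' : B ≤ A := pow_le_pow_left₀ (by linarith : 0 ≤ 1 - y) (by linarith : 1 - y ≤ 1 + y) (n + 3)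
  rw [e1, e2, le_sub_iff_add_le, ← add_div, div_le_div_iff₀ (by positivity) (by positivity)]
  push_cast
  have hn : (0:ℝ) ≤ n := by positivity
  have : 0 ≤ (A - B) * n := mul_nonneg (by linarith) hn
  nlinarith

lemma poly_big' (n : ℕ) {y : ℝ} (h0 : 0 < y) (h1 : y < 1) : KK (n + 5) 1 y < kap (n + 3) y := by
  rw [kap_eq (n + 1) h0.le h1.le, KK_one_left _ h1.le]
  rw [show n + 5 - 1 = n + 4 by omega, show n + 1 + 2 = n + 3 by omega, Nat.factorial_succ (n + 3)]
  set A := (1 + y) ^ (n + 3) with hA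
  set B := (1 - y) ^ (n + 3) with hB
  have e1 : (1 + y) ^ (n + 4) = A * (1 + y) := pow_succ _ _
  have e2 : (1 - y) ^ (n + 4) = B * (1 - y) := pow_succ _ _
  have f : (0:ℝ) < ((n + 3).factorial : ℝ) := by positivity
  have hAB : 0 < (A - B) - y * (A + B) := by
    have : (A - B) - y * (A + B) = (1 - y) * (1 + y) * ((1 + y) ^ (n + 2) - (1 - y) ^ (n + 2)) := by
      rw [hA, hB]; ring
    rw [this]
    apply mul_pos (mul_pos (by linarith) (by linarith))
    have := pow_lt_pow_left₀ (by linarith : 1 - y < 1 + y) (by linarith : 0 ≤ 1 - y) (by omega : n + 2 ≠ 0)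
    linarith
  have hB' : B ≤ A := pow_le_pow_left₀ (by linarith : 0 ≤ 1 - y) (by linarith : 1 - y ≤ 1 + y) (n + 3)
  rw [e1, e2, lt_sub_iff_add_lt, ← add_div, div_lt_div_iff₀ (by positivity) (by positivity)]
  push_cast
  have hn : (0:ℝ) ≤ n := by positivity
  have : 0 ≤ (A - B) * n := mul_nonneg (by linarith) hn
  have key : 0 < ((A - B) - y * (A + B)) * (n + 3).factorial := mul_pos hAB f
  nlinarith

lemma C2_ge (n : ℕ) {x y : ℝ} (hx : x ∈ Set.Icc (0:ℝ) 1) (hy : y ∈ Set.Icc (0:ℝ) 1) :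
    x * kap n y ≤ AA n (KK 2 x) y := by
  rw [← C3]
  refine AA_mono n (KK_cont2 3 x) (KK_cont2 2 x) (fun z hz => ?_) y hy
  rw [KK_three, KK_two]
  obtain ⟨a, b⟩ := hx
  obtain ⟨c, d⟩ := hz
  apply le_min <;> nlinarith

lemma C2_gt {n : ℕ} (hn : 2 ≤ n) {x y : ℝ} (hx : x ∈ Set.Ioo (0:ℝ) 1) (hy : y ∈ Set.Ioc (0:ℝ) 1) :
    x * kap n y < AA n (KK 2 x) y := by
  rw [← C3]
  refine (AA_lt hn (KK_cont2 3 x) (KK_cont2 2 x) ⟨fun z hz => ?_, fun z hz => ?_⟩).2 y hy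
  · beta_reduce
    rw [KK_three, KK_two]
    obtain ⟨a, b⟩ := hx
    obtain ⟨c, d⟩ := hz
    apply le_min <;> nlinarith
  · beta_reduce
    rw [KK_three, KK_two]
    obtain ⟨a, b⟩ := hx
    obtain ⟨c, d⟩ := hz
    apply lt_min <;> nlinarith

lemma big_le (n : ℕ) {x y : ℝ} (hx : x ∈ Set.Icc (0:ℝ) 1) (hy : y ∈ Set.Icc (0:ℝ) 1) :
    KK (n + 5) x y ≤ AA (n + 3) (KK 2 x) y := by
  have h1 := C2_ge (n + 3) hx hy
  have h2 := mul_le_mul_of_nonneg_left (poly_big n hy.1 hy.2) hx.1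
  have h3 := C2n (n + 1) hx.1 hx.2 hy.1 hy.2
  have h4 := kap_eq (n + 1) hy.1 hy.2
  rw [show n + 1 + 4 = n + 5 by omega, show n + 1 + 2 = n + 3 by omega] at h3 h4
  have h5 : KK (n + 5) x y ≤ x * KK (n + 5) 1 y := by
    rw [h3, h4] at h1; linarith
  linarith

lemma big_lt (n : ℕ) {x y : ℝ} (hx : x ∈ Set.Ioo (0:ℝ) 1) (hy : y ∈ Set.Ioc (0:ℝ) 1) :
    KK (n + 5) x y < AA (n + 3) (KK 2 x) y := by
  have h1 := C2_gt (n := n + 3) (by omega) hx hy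
  have h2 := mul_le_mul_of_nonneg_left (poly_big n hy.1.le hy.2) hx.1.le
  have h3 := C2n (n + 1) hx.1.le hx.2.le hy.1.le hy.2
  have h4 := kap_eq (n + 1) hy.1.le hy.2
  rw [show n + 1 + 4 = n + 5 by omega, show n + 1 + 2 = n + 3 by omega] at h3 h4
  have h5 : KK (n + 5) x y < x * KK (n + 5) 1 y := by
    rw [h3, h4] at h1; linarith
  linarith

lemma st_big (n : ℕ) : Lt0 (KK (n + 5) 1) (AA (n + 3) (KK 2 1)) := by
  rw [kap_two_start]
  exact ⟨fun y hy => poly_big n hy.1 hy.2, fun y hy => poly_big' n hy.1 hy.2⟩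

/-- the start `4,4` -/
lemma st44 {y : ℝ} (hy : y ∈ Set.Icc (0:ℝ) 1) : AA 4 (KK 4 1) y ≤ (2 / 3) * kap 4 y := by
  have : AA 4 (KK 4 1) y ≤ AA 4 (fun z => (2 / 3) * z) y := by
    refine AA_mono 4 (KK_cont2 4 1) (by fun_prop) (fun z hz => ?_) y hy
    rw [KK4_one hz.2]
    have h2 : z ^ 2 ≤ 1 := pow_le_one₀ hz.1 hz.2
    have : 0 ≤ z * (1 - z ^ 2) := mul_nonneg hz.1 (by linarith)
    nlinarith
  refine this.trans (le_of_eq ?_)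
  rw [AA_smul]; rfl

lemma st444 : Lt1 (AA 4 (AA 4 (KK 4 1))) (AA 3 (AA 3 (AA 3 (KK 3 1)))) := by
  have e : ∀ y, AA 3 (AA 3 (AA 3 (KK 3 1))) y = y / 27 := by
    intro y
    have h3 : kap 3 = fun z => (1 / 3) * z := by ext z; rw [kap_3]; ring
    rw [kap_three_start, h3, AA_smul]
    change AA 3 (fun y => 1 / 3 * kap 3 y) y = _
    rw [AA_smul]
    change 1 / 3 * AA 3 (kap 3) y = _
    rw [h3, AA_smul]
    change 1 / 3 * (1 / 3 * kap 3 y) = _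
    rw [kap_3]; ring
  have u : ∀ y ∈ Set.Icc (0:ℝ) 1, AA 4 (AA 4 (KK 4 1)) y ≤ 2 * y / 75 := by
    intro y hy
    have : AA 4 (AA 4 (KK 4 1)) y ≤ AA 4 (fun z => (2 / 15) * z) y := by
      refine AA_mono 4 (AA_cont 4 (KK_cont2 4 1)) (by fun_prop) (fun z hz => ?_) y hy
      have := st44 hz
      have := k4le hz
      linarith
    rw [AA_smul] at this
    change _ ≤ 2 / 15 * kap 4 y at this
    have := k4le hy
    linarith
  refine ⟨fun y hy => ?_, fun y hy => ?_⟩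
  · rw [e]; have := u y hy; have := hy.1; linarith
  · rw [e]; have := u y (pos_Ioc hy); have := hy.1; linarith

lemma st443 : Lt1 (AA 3 (AA 4 (KK 4 1))) (AA 3 (AA 2 (AA 3 (KK 3 1)))) := by
  have e : ∀ y, AA 3 (AA 2 (AA 3 (KK 3 1))) y = 2 * y / 45 := by
    intro y
    have h3 : kap 3 = fun z => (1 / 3) * z := by ext z; rw [kap_3]; ring
    rw [kap_three_start, h3, AA_smul]
    change AA 3 (fun y => 1 / 3 * kap 2 y) y = _
    rw [AA_smul]
    change 1 / 3 * AA 3 (kap 2) y = _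
    rw [AA_three]
    have : ∫ z in (0:ℝ)..1, kap 2 z * z = ∫ z in (0:ℝ)..1, (1 / 2) * z ^ 2 - (1 / 6) * z ^ 4 := by
      apply intervalIntegral.integral_congr
      intro z hz
      rw [Set.uIcc_of_le (by norm_num)] at hz
      simp only [kap_2 hz.1 hz.2]
      ring
    rw [this, intervalIntegral.integral_sub (Continuous.intervalIntegrable (by fun_prop) _ _)
      (Continuous.intervalIntegrable (by fun_prop) _ _),
      intervalIntegral.integral_const_mul, intervalIntegral.integral_const_mul, integral_pow, integral_pow]
    norm_num; ring
  have u : ∀ y ∈ Set.Icc (0:ℝ) 1, AA 3 (AA 4 (KK 4 1)) y ≤ 7 * y / 180 := by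
    intro y hy
    have : AA 3 (AA 4 (KK 4 1)) y ≤ AA 3 (fun z => (1 / 12) * z + (1 / 18) * z ^ 3) y := by
      refine AA_mono 3 (AA_cont 4 (KK_cont2 4 1)) (by fun_prop) (fun z hz => ?_) y hy
      have := st44 hz
      rw [kap_4 hz.1 hz.2] at this
      have := pow_nonneg hz.1 5
      linarith
    rw [AA_three (fun z => (1 / 12) * z + (1 / 18) * z ^ 3)] at this
    have e2 : ∫ z in (0:ℝ)..1, ((1 / 12) * z + (1 / 18) * z ^ 3) * z = 7 / 180 := by
      have : ∫ z in (0:ℝ)..1, ((1 / 12) * z + (1 / 18) * z ^ 3) * z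
        = ∫ z in (0:ℝ)..1, (1 / 12) * z ^ 2 + (1 / 18) * z ^ 4 := by
        congr 1; ext z; ring
      rw [this, intervalIntegral.integral_add (Continuous.intervalIntegrable (by fun_prop) _ _)
        (Continuous.intervalIntegrable (by fun_prop) _ _),
        intervalIntegral.integral_const_mul, intervalIntegral.integral_const_mul, integral_pow, integral_pow]
      norm_num
    rw [e2] at this
    linarith
  refine ⟨fun y hy => ?_, fun y hy => ?_⟩
  · rw [e]; have := u y hy; have := hy.1; linarith
  · rw [e]; have := u y (pos_Ioc hy); have := hy.1; linarith

end Part2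

section Part3

noncomputable def QQ : List ℕ → ℝ
  | [] => 0
  | a :: l => run (KK a 1) l 1

lemma run_cont (l : List ℕ) {F : ℝ → ℝ} (hF : Continuous F) : Continuous (run F l) := by
  induction l generalizing F with
  | nil => exact hF
  | cons m l ih => rw [run_cons]; exact ih (AA_cont m hF)

lemma one_mem_Ioc : (1:ℝ) ∈ Set.Ioc (0:ℝ) 1 := by simp

lemma QQ_pos {n : ℕ} (hn : 2 ≤ n) : 0 < QQ [n] := (Gd_KK hn).pos 1 one_mem_Ioc

lemma AA_zero (m : ℕ) : AA m (fun _ => 0) = fun _ => 0 := by ext y; simp [AA]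
lemma run_zero (l : List ℕ) : run (fun _ => 0) l = fun _ => 0 := by
  induction l with
  | nil => rfl
  | cons m l ih => rw [run_cons, AA_zero, ih]

lemma AA_one (F : ℝ → ℝ) : AA 1 F = fun _ => 0 := by ext y; simp [AA, KK_one]

lemma run_one (l : List ℕ) (F : ℝ → ℝ) (h : 1 ∈ l) : run F l = fun _ => 0 := by
  obtain ⟨u, v, rfl⟩ := List.append_of_mem h
  rw [run_append, run_cons, AA_one, run_zero]

lemma QQ_one (l : List ℕ) (h : 1 ∈ l) : QQ l = 0 := by
  cases l with
  | nil => rfl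
  | cons a l =>
    rcases List.mem_cons.1 h with h | h
    · subst h
      have : KK 1 1 = fun _ => 0 := by ext y; exact KK_one _ _
      rw [QQ, this, run_zero]
    · rw [QQ, run_one l _ h]

lemma QQ_mid {a : ℕ} {u w w' v : List ℕ} (hu : ∀ m ∈ a :: u, 2 ≤ m) (hv : ∀ m ∈ v, 2 ≤ m)
    (h : ∀ F, Gd F → Lt1 (run F w) (run F w')) : QQ ((a :: u) ++ w ++ v) < QQ ((a :: u) ++ w' ++ v) := by
  have hF : Gd (run (KK a 1) u) := run_Gd (fun m hm => hu m (by simp [hm])) (Gd_KK (hu a (by simp)))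
  have := run_lt1 hv (run_cont w hF.cont) (run_cont w' hF.cont) (h _ hF)
  simpa [QQ, run_append] using this.2 1 one_mem_Ioc

lemma QQ_end {a : ℕ} {u w w' : List ℕ} (hu : ∀ m ∈ a :: u, 2 ≤ m)
    (h : ∀ F, Gd F → run F w 1 < run F w' 1) : QQ ((a :: u) ++ w) < QQ ((a :: u) ++ w') := by
  have hF : Gd (run (KK a 1) u) := run_Gd (fun m hm => hu m (by simp [hm])) (Gd_KK (hu a (by simp)))
  simpa [QQ, run_append] using h _ hF

lemma QQ_start {a b : ℕ} {w w' v : List ℕ} (hv : ∀ m ∈ v, 2 ≤ m) (hne : v ≠ [])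
    (h : Lt0 (run (KK a 1) w) (run (KK b 1) w')) : QQ ((a :: w) ++ v) < QQ ((b :: w') ++ v) := by
  have := run_lt0 hv hne (run_cont w (KK_cont2' a 1)) (run_cont w' (KK_cont2' b 1)) h
  simpa [QQ, run_append] using this.2 1 one_mem_Ioc

lemma QQ_start1 {a b : ℕ} {w w' v : List ℕ} (hv : ∀ m ∈ v, 2 ≤ m)
    (h : Lt1 (run (KK a 1) w) (run (KK b 1) w')) : QQ ((a :: w) ++ v) < QQ ((b :: w') ++ v) := by
  have := run_lt1 hv (run_cont w (KK_cont2' a 1)) (run_cont w' (KK_cont2' b 1)) h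
  simpa [QQ, run_append] using this.2 1 one_mem_Ioc

lemma mid_big (n : ℕ) {F : ℝ → ℝ} (hF : Gd F) : Lt1 (run F [n + 5]) (run F [2, n + 3]) := by
  have := ker_lt hF (H1 := fun x y => KK (n + 5) x y) (H2 := fun x y => AA (n + 3) (KK 2 x) y)
    (fun y => KK_cont1 _ y) (fun y => C_cont _ _ y) (fun x hx y hy => big_le n hx hy)
    (fun x hx y hy => big_lt n hx hy)
  simp only [run_cons, run_nil]
  rw [show AA (n + 3) (AA 2 F) = _ from funext (AA_AA 2 (n + 3) hF.cont)]
  exact this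

lemma mid_24 {F : ℝ → ℝ} (hF : Gd F) : Lt1 (run F [2, 4]) (run F [3, 3]) := by
  have := ker_lt hF (H1 := fun x y => AA 4 (KK 2 x) y) (H2 := fun x y => AA 3 (KK 3 x) y)
    (fun y => C_cont _ _ y) (fun y => C_cont _ _ y) (fun x hx y hy => k24 hx hy)
    (fun x hx y hy => k24' ⟨hx.1, hx.2.le⟩ hy)
  simp only [run_cons, run_nil]
  rw [show AA 4 (AA 2 F) = _ from funext (AA_AA 2 4 hF.cont),
    show AA 3 (AA 3 F) = _ from funext (AA_AA 3 3 hF.cont)]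
  exact this

lemma mid_42 {F : ℝ → ℝ} (hF : Gd F) : Lt1 (run F [4, 2]) (run F [3, 3]) := by
  have := ker_lt hF (H1 := fun x y => AA 2 (KK 4 x) y) (H2 := fun x y => AA 3 (KK 3 x) y)
    (fun y => C_cont _ _ y) (fun y => C_cont _ _ y) (fun x hx y hy => k42 hx hy)
    (fun x hx y hy => k42' ⟨hx.1, hx.2.le⟩ hy)
  simp only [run_cons, run_nil]
  rw [show AA 2 (AA 4 F) = _ from funext (AA_AA 4 2 hF.cont),
    show AA 3 (AA 3 F) = _ from funext (AA_AA 3 3 hF.cont)]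
  exact this

lemma one_Ioc : (1:ℝ) ∈ Set.Ioc (0:ℝ) 1 := by simp

lemma st_24 : Lt1 (run (KK 2 1) [4]) (run (KK 3 1) [3]) :=
  ⟨fun _ hy => k24 (pos_Ioc one_Ioc) hy, fun _ hy => k24' one_Ioc hy⟩

lemma st_42 : Lt1 (run (KK 4 1) [2]) (run (KK 3 1) [3]) :=
  ⟨fun _ hy => k42 (pos_Ioc one_Ioc) hy, fun _ hy => k42' one_Ioc hy⟩

structure MaxQ (d : List ℕ) : Prop where
  two : ∀ m ∈ d, 2 ≤ m
  len : 3 ≤ d.length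
  max : ∀ d' : List ℕ, (∀ m ∈ d', 2 ≤ m) → d'.sum = d.sum → QQ d' ≤ QQ d

lemma MaxQ.no {d : List ℕ} (h : MaxQ d) (d' : List ℕ) (h2 : ∀ m ∈ d', 2 ≤ m) (hs : d'.sum = d.sum)
    (hlt : QQ d < QQ d') : False := absurd (h.max d' h2 hs) (not_le.2 hlt)

lemma MaxQ.le4 {d : List ℕ} (h : MaxQ d) : ∀ m ∈ d, m ≤ 4 := by
  intro m hm
  by_contra hc
  obtain ⟨n, rfl⟩ : ∃ n, m = n + 5 := ⟨m - 5, by omega⟩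
  obtain ⟨u, v, rfl⟩ := List.append_of_mem hm
  have h2 := h.two
  have hv : ∀ m ∈ v, 2 ≤ m := fun m hm => h2 m (by simp [hm])
  have hlen := h.len
  cases u with
  | nil =>
    refine h.no (2 :: (n + 3) :: v) ?_ ?_ ?_
    · simp at h2 ⊢; exact h2
    · simp; omega
    · refine QQ_start (a := n + 5) (b := 2) (w := []) (w' := [n + 3]) hv ?_ (st_big n)
      rintro rfl; simp at hlen
  | cons a u =>
    refine h.no ((a :: u) ++ [2, n + 3] ++ v) ?_ ?_ ?_
    · simp at h2 ⊢; grind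
    · simp; omega
    · have := QQ_mid (a := a) (u := u) (v := v) (fun m hm => h2 m (List.mem_append_left _ hm)) hv (fun F hF => mid_big n hF)
      simpa using this

lemma MaxQ.no24 {u v : List ℕ} (h : MaxQ (u ++ [2, 4] ++ v)) : False := by
  have h2 := h.two
  have hv : ∀ m ∈ v, 2 ≤ m := fun m hm => h2 m (by simp [hm])
  refine h.no (u ++ [3, 3] ++ v) ?_ (by simp; omega) ?_
  · simp at h2 ⊢; grind
  cases u with
  | nil => exact QQ_start1 hv st_24
  | cons a u =>
    exact QQ_mid (fun m hm => h2 m (List.mem_append_left _ (List.mem_append_left _ hm))) hv (fun F hF => mid_24 hF)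

lemma MaxQ.no42 {u v : List ℕ} (h : MaxQ (u ++ [4, 2] ++ v)) : False := by
  have h2 := h.two
  have hv : ∀ m ∈ v, 2 ≤ m := fun m hm => h2 m (by simp [hm])
  refine h.no (u ++ [3, 3] ++ v) ?_ (by simp; omega) ?_
  · simp at h2 ⊢; grind
  cases u with
  | nil => exact QQ_start1 hv st_42
  | cons a u =>
    exact QQ_mid (fun m hm => h2 m (List.mem_append_left _ (List.mem_append_left _ hm))) hv (fun F hF => mid_42 hF)

lemma MaxQ.start2 {v : List ℕ} (h : MaxQ (2 :: v)) : False := by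
  have h2 := h.two
  have h4 := h.le4
  have hlen := h.len
  match v, h with
  | [], h => simp at hlen
  | m :: v, h =>
    have hv : ∀ m ∈ v, 2 ≤ m := fun m hm => h2 m (by simp [hm])
    have hne : v ≠ [] := by rintro rfl; simp at hlen
    have a := h2 m (by simp)
    have b := h4 m (by simp)
    obtain rfl | rfl | rfl : m = 2 ∨ m = 3 ∨ m = 4 := by omega
    · refine h.no (4 :: v) ?_ (by simp; omega) (QQ_start1 (w := [2]) (w' := []) hv st22)
      simpa using hv
    · refine h.no (3 :: 2 :: v) ?_ (by simp; omega) (QQ_start (w := [3]) (w' := [2]) hv hne st23)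
      simpa using hv
    · exact MaxQ.no24 (u := []) h

lemma MaxQ.end2 {u : List ℕ} (h : MaxQ (u ++ [2])) : False := by
  have h2 := h.two
  have h4 := h.le4
  have hlen := h.len
  rcases List.eq_nil_or_concat u with rfl | ⟨u, m, rfl⟩
  · simp at hlen
  simp only [List.concat_eq_append] at *
  cases u with
  | nil => simp at hlen
  | cons a u =>
  have hu : ∀ m ∈ a :: u, 2 ≤ m := fun x hm => h2 x (by simp at hm ⊢; grind)
  have x := h2 m (by simp)
  have y := h4 m (by simp)
  obtain rfl | rfl | rfl : m = 2 ∨ m = 3 ∨ m = 4 := by omega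
  · refine h.no ((a :: u) ++ [4]) ?_ (by simp) ?_
    · simp at hu ⊢; grind
    · have := QQ_end (w := [2, 2]) (w' := [4]) hu ?_
      · simpa using this
      · intro F hF
        simp only [run_cons, run_nil]
        rw [AA_AA 2 2 hF.cont]
        have e : ∀ x, AA 2 (KK 2 x) 1 = AA 2 (KK 2 1) x := fun x => C_symm 2 2 x 1
        simp only [e]
        show (∫ x in (0:ℝ)..1, F x * AA 2 (KK 2 1) x) < ∫ x in (0:ℝ)..1, F x * KK 4 x 1
        refine int_lt (hF.cont.mul (AA_cont 2 (KK_cont2 2 1))) (hF.cont.mul (KK_cont1 4 1))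
          (fun x hx => mul_lt_mul_of_pos_left ?_ (hF.pos x ⟨hx.1, hx.2.le⟩))
        rw [KK_symm 4]
        exact st22.2 x ⟨hx.1, hx.2.le⟩
  · refine h.no ((a :: u) ++ [2, 3]) ?_ (by simp) ?_
    · simp at hu ⊢; grind
    · have := QQ_end (w := [3, 2]) (w' := [2, 3]) hu (fun F hF => end_lt hF st23)
      simpa using this
  · exact MaxQ.no42 (u := a :: u) (v := []) (by simpa using h)

lemma MaxQ.end43 {u : List ℕ} (h : MaxQ (u ++ [4, 3])) : False := by
  have h2 := h.two
  have hlen := h.len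
  cases u with
  | nil => simp at hlen
  | cons a u =>
  have hu : ∀ m ∈ a :: u, 2 ≤ m := fun x hm => h2 x (by simp at hm ⊢; grind)
  refine h.no ((a :: u) ++ [3, 4]) ?_ (by simp) ?_
  · simp at hu ⊢; grind
  · exact QQ_end (w := [4, 3]) (w' := [3, 4]) hu (fun F hF => end_lt hF st34)

lemma MaxQ.start44 {v : List ℕ} (h : MaxQ (4 :: 4 :: v)) : False := by
  have h2 := h.two
  have h4 := h.le4
  have hlen := h.len
  match v, h with
  | [], h => simp at hlen
  | m :: v, h =>
    have hv : ∀ m ∈ v, 2 ≤ m := fun m hm => h2 m (by simp [hm])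
    have a := h2 m (by simp)
    have b := h4 m (by simp)
    obtain rfl | rfl | rfl : m = 2 ∨ m = 3 ∨ m = 4 := by omega
    · exact MaxQ.no42 (u := [4]) h
    · refine h.no (3 :: 3 :: 2 :: 3 :: v) ?_ (by simp; omega) (QQ_start1 (w := [4, 3]) (w' := [3, 2, 3]) hv st443)
      simpa using hv
    · refine h.no (3 :: 3 :: 3 :: 3 :: v) ?_ (by simp; omega) (QQ_start1 (w := [4, 4]) (w' := [3, 3, 3]) hv st444)
      simpa using hv

/-! combinatorial decomposition -/

def Blk (l : List ℕ) : Prop := l = [] ∨ (∃ s, 1 ≤ s ∧ l = List.replicate s 2) ∨ ∃ t, 1 ≤ t ∧ l = List.replicate t 4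

lemma chain3_congr {x x' : ℕ → List ℕ} {k : ℕ} (h : ∀ i ≤ k, x i = x' i) : chain3 x k = chain3 x' k := by
  induction k with
  | zero => exact h 0 le_rfl
  | succ k ih =>
    simp only [chain3]
    rw [ih (fun i hi => h i (by omega)), h (k + 1) le_rfl]

lemma chain3_update_last (x : ℕ → List ℕ) (k : ℕ) (l : List ℕ) :
    chain3 (Function.update x k (x k ++ l)) k = chain3 x k ++ l := by
  cases k with
  | zero => simp [chain3]
  | succ k =>
    simp only [chain3, Function.update_self]
    rw [chain3_congr (x' := x)]
    · simp
    · intro i hi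
      rw [Function.update_of_ne (by omega)]

lemma chain3_suffix (x : ℕ → List ℕ) (k : ℕ) : ∃ w, chain3 x k = w ++ x k := by
  cases k with
  | zero => exact ⟨[], by simp [chain3]⟩
  | succ k => exact ⟨chain3 x k ++ [3], by simp [chain3]⟩

lemma decomp (c : List ℕ) (h : ∀ m ∈ c, m = 2 ∨ m = 3 ∨ m = 4)
    (h24 : ∀ u v, c ≠ u ++ [2, 4] ++ v) (h42 : ∀ u v, c ≠ u ++ [4, 2] ++ v) :
    ∃ k x, c = chain3 x k ∧ ∀ i ≤ k, Blk (x i) := by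
  induction c using List.reverseRecOn with
  | nil => exact ⟨0, fun _ => [], rfl, fun i _ => Or.inl rfl⟩
  | append_singleton c a ih =>
    obtain ⟨k, x, hc, hb⟩ := ih (fun m hm => h m (by simp [hm]))
      (fun u v e => h24 u (v ++ [a]) (by simp [e])) (fun u v e => h42 u (v ++ [a]) (by simp [e]))
    have upd : Blk (x k ++ [a]) → ∃ k x, c ++ [a] = chain3 x k ∧ ∀ i ≤ k, Blk (x i) := by
      intro hB
      refine ⟨k, Function.update x k (x k ++ [a]), ?_, ?_⟩
      · rw [chain3_update_last, hc]
      · intro i hi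
        by_cases hik : i = k
        · subst hik; simpa using hB
        · rw [Function.update_of_ne hik]; exact hb i hi
    obtain ⟨w, hw⟩ := chain3_suffix x k
    rcases h a (by simp) with rfl | rfl | rfl
    · apply upd
      rcases hb k le_rfl with e | ⟨s, hs, e⟩ | ⟨s, hs, e⟩
      · rw [e]; exact Or.inr (Or.inl ⟨1, le_rfl, rfl⟩)
      · rw [e]; exact Or.inr (Or.inl ⟨s + 1, by omega, by rw [List.replicate_succ']⟩)
      · exfalso
        obtain ⟨s, rfl⟩ : ∃ s', s = s' + 1 := ⟨s - 1, by omega⟩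
        refine h42 (w ++ List.replicate s 4) [] ?_
        rw [hc, hw, e, List.replicate_succ']; simp
    · refine ⟨k + 1, Function.update x (k + 1) [], ?_, ?_⟩
      · simp only [chain3, Function.update_self]
        rw [chain3_congr (x' := x), hc]
        · simp
        · intro i hi
          rw [Function.update_of_ne (by omega)]
      · intro i hi
        by_cases hik : i = k + 1
        · subst hik; simp [Blk]
        · rw [Function.update_of_ne hik]; exact hb i (by omega)
    · apply upd
      rcases hb k le_rfl with e | ⟨s, hs, e⟩ | ⟨s, hs, e⟩
      · rw [e]; exact Or.inr (Or.inr ⟨1, le_rfl, rfl⟩)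
      · exfalso
        obtain ⟨s, rfl⟩ : ∃ s', s = s' + 1 := ⟨s - 1, by omega⟩
        refine h24 (w ++ List.replicate s 2) [] ?_
        rw [hc, hw, e, List.replicate_succ']; simp
      · rw [e]; exact Or.inr (Or.inr ⟨s + 1, by omega, by rw [List.replicate_succ']⟩)

lemma chain3_head (x : ℕ → List ℕ) (k : ℕ) : ∃ w, chain3 x k = x 0 ++ w := by
  induction k with
  | zero => exact ⟨[], by simp [chain3]⟩
  | succ k ih => obtain ⟨w, hw⟩ := ih; exact ⟨w ++ [3] ++ x (k + 1), by simp [chain3, hw]⟩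

lemma final_form (c : List ℕ) (hlen : 3 ≤ c.length) (h : ∀ m ∈ c, m = 2 ∨ m = 3 ∨ m = 4)
    (h24 : ∀ u v, c ≠ u ++ [2, 4] ++ v) (h42 : ∀ u v, c ≠ u ++ [4, 2] ++ v)
    (hs2 : ∀ v, c ≠ 2 :: v) (hs44 : ∀ v, c ≠ 4 :: 4 :: v) (he : ∀ u, c ≠ u ++ [4]) :
    ∃ (k : ℕ) (x : ℕ → List ℕ), 1 ≤ k ∧ c = chain3 x k ∧
      (x 0 = [] ∨ x 0 = [4]) ∧
      (x k = [] ∨ ∃ s, 1 ≤ s ∧ x k = List.replicate s 2) ∧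
      (∀ i, 0 < i → i < k →
        x i = [] ∨ (∃ s, 1 ≤ s ∧ x i = List.replicate s 2) ∨
          (∃ t, 1 ≤ t ∧ x i = List.replicate t 4)) := by
  obtain ⟨k, x, hc, hb⟩ := decomp c h h24 h42
  have h0 : x 0 = [] ∨ x 0 = [4] := by
    obtain ⟨w, hw⟩ := chain3_head x k
    rcases hb 0 (by omega) with e | ⟨s, hs, e⟩ | ⟨s, hs, e⟩
    · exact Or.inl e
    · obtain ⟨s, rfl⟩ : ∃ s', s = s' + 1 := ⟨s - 1, by omega⟩
      exact absurd (by rw [hc, hw, e, List.replicate_succ]; rfl) (hs2 (List.replicate s 2 ++ w))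
    · by_cases h1 : s = 1
      · subst h1; exact Or.inr e
      · obtain ⟨s, rfl⟩ : ∃ s', s = s' + 2 := ⟨s - 2, by omega⟩
        exact absurd (by rw [hc, hw, e, List.replicate_succ, List.replicate_succ]; rfl) (hs44 (List.replicate s 4 ++ w))
  refine ⟨k, x, ?_, hc, h0, ?_, fun i _ hi => hb i hi.le⟩
  · by_contra hk
    obtain rfl : k = 0 := by omega
    rw [hc] at hlen
    rcases h0 with e | e <;> simp [chain3, e] at hlen
  · obtain ⟨w, hw⟩ := chain3_suffix x k
    rcases hb k le_rfl with e | ⟨s, hs, e⟩ | ⟨s, hs, e⟩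
    · exact Or.inl e
    · exact Or.inr ⟨s, hs, e⟩
    · obtain ⟨s, rfl⟩ : ∃ s', s = s' + 1 := ⟨s - 1, by omega⟩
      exact absurd (by rw [hc, hw, e, List.replicate_succ']; simp) (he (w ++ List.replicate s 4))

/-- from `d` (last part increased by one) to `c` -/
lemma form_of_MaxQ (u : List ℕ) (l : ℕ) (h : MaxQ (u ++ [l + 1])) :
    ∃ (k : ℕ) (x : ℕ → List ℕ), 1 ≤ k ∧ (u ++ [l]) = chain3 x k ∧
      (x 0 = [] ∨ x 0 = [4]) ∧
      (x k = [] ∨ ∃ s, 1 ≤ s ∧ x k = List.replicate s 2) ∧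
      (∀ i, 0 < i → i < k →
        x i = [] ∨ (∃ s, 1 ≤ s ∧ x i = List.replicate s 2) ∨
          (∃ t, 1 ≤ t ∧ x i = List.replicate t 4)) := by
  have h2 := h.two
  have h4 := h.le4
  have hlen := h.len
  have hl : l = 2 ∨ l = 3 := by
    have a := h2 (l + 1) (by simp)
    have b := h4 (l + 1) (by simp)
    have c : l ≠ 1 := by rintro rfl; exact h.end2
    omega
  have split : ∀ (p v : List ℕ) (a b : ℕ), u ++ [l] = p ++ [a, b] ++ v →
      (∃ v', u = p ++ [a, b] ++ v') ∨ (v = [] ∧ l = b ∧ u = p ++ [a]) := by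
    intro p v a b e
    rcases List.eq_nil_or_concat v with rfl | ⟨v, m, rfl⟩
    · right
      have : u ++ [l] = (p ++ [a]) ++ [b] := by simpa using e
      have := List.append_inj' this rfl
      simp_all
    · left
      refine ⟨v, ?_⟩
      have : u ++ [l] = (p ++ [a, b] ++ v) ++ [m] := by simpa using e
      exact (List.append_inj' this rfl).1
  have hulen : 2 ≤ u.length := by simp at hlen; omega
  apply final_form
  · simp at hlen ⊢; omega
  · intro m hm
    rcases List.mem_append.1 hm with hm | hm
    · have a := h2 m (by simp [hm]); have b := h4 m (by simp [hm]); omega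
    · simp at hm; omega
  · intro p v e
    rcases split p v _ _ e with ⟨v', rfl⟩ | ⟨_, h', _⟩
    · exact MaxQ.no24 (u := p) (v := v' ++ [l + 1]) (by simpa using h)
    · omega
  · intro p v e
    rcases split p v _ _ e with ⟨v', rfl⟩ | ⟨_, rfl, rfl⟩
    · exact MaxQ.no42 (u := p) (v := v' ++ [l + 1]) (by simpa using h)
    · exact MaxQ.end43 (u := p) (by simpa using h)
  · intro v e
    match u, hulen, h with
    | a :: u, _, h =>
      simp at e
      obtain ⟨rfl, _⟩ := e
      exact MaxQ.start2 (v := u ++ [l + 1]) h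
  · intro v e
    match u, hulen, h with
    | a :: b :: u, _, h =>
      simp at e
      obtain ⟨rfl, rfl, _⟩ := e
      exact MaxQ.start44 (v := u ++ [l + 1]) h
  · intro p e
    have := (List.append_inj' e rfl).2
    simp at this
    omega

end Part3

section Part4

noncomputable def MM (p : ℕ) (x y : ℝ) : ℝ :=
  (|x - y| ^ (p + 1) + (x - y) * |x - y| ^ p) / (2 * ((p + 1).factorial : ℝ))

lemma MM_cont (p : ℕ) : Continuous (fun q : ℝ × ℝ => MM p q.1 q.2) := by
  unfold MM; fun_prop

lemma MM_cont2 (p : ℕ) (x : ℝ) : Continuous (fun y : ℝ => MM p x y) := by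
  unfold MM; fun_prop

lemma KK_deriv (p : ℕ) (x y : ℝ) :
    HasDerivAt (fun y => KK (p + 3) x y) (KK (p + 2) x y + MM p x y) y := by
  have h1 : HasDerivAt (fun y : ℝ => x - y) (-1) y := by
    simpa using (hasDerivAt_id y).const_sub x
  have h2 := (hd_abs p (x - y)).comp y h1
  have h3 : HasDerivAt (fun y : ℝ => (x + y) ^ (p + 2)) ((p + 2) * (x + y) ^ (p + 1)) y := by
    refine HasDerivAt.congr_deriv (((hasDerivAt_id y).const_add x).pow (p + 2)) ?_
    simp
  have h4 := (h3.sub h2).div_const (2 * ((p + 2).factorial : ℝ))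
  refine HasDerivAt.congr_deriv h4 ?_
  simp only [KK, MM, Nat.add_sub_cancel, show p + 2 - 1 = p + 1 from rfl]
  have : ((p + 1).factorial : ℝ) ≠ 0 := by positivity
  have h6 : (p : ℝ) + 2 ≠ 0 := by positivity
  rw [show (p + 2).factorial = (p + 2) * (p + 1).factorial from rfl]
  push_cast
  field_simp
  ring

lemma MM_deriv (p : ℕ) (x y : ℝ) :
    HasDerivAt (fun y => - MM (p + 1) x y) (MM p x y) y := by
  have h1 : HasDerivAt (fun y : ℝ => x - y) (-1) y := by
    simpa using (hasDerivAt_id y).const_sub x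
  have h2 := (hd_abs p (x - y)).comp y h1
  have h3 := (hd_tabs p (x - y)).comp y h1
  have h4 := ((h2.add h3).div_const (2 * ((p + 2).factorial : ℝ))).neg
  refine HasDerivAt.congr_deriv h4 ?_
  simp only [MM]
  have : ((p + 1).factorial : ℝ) ≠ 0 := by positivity
  have h6 : (p : ℝ) + 2 ≠ 0 := by positivity
  rw [show (p + 2).factorial = (p + 2) * (p + 1).factorial from rfl]
  push_cast
  field_simp
  ring

lemma int_A (p : ℕ) {x : ℝ} (hx : 0 ≤ x) (y : ℝ) :
    ∫ z in (0:ℝ)..y, (KK (p + 2) x z + MM p x z) = KK (p + 3) x y := by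
  rw [intervalIntegral.integral_eq_sub_of_hasDerivAt (fun z _ => KK_deriv p x z)
    (((KK_cont2 _ _).add (MM_cont2 _ _)).intervalIntegrable _ _)]
  simp [KK, abs_of_nonneg hx]

lemma int_B (p : ℕ) {x : ℝ} (hx : x ≤ 1) (y : ℝ) :
    ∫ z in y..(1:ℝ), MM p x z = MM (p + 1) x y := by
  rw [intervalIntegral.integral_eq_sub_of_hasDerivAt (fun z _ => MM_deriv p x z)
    ((MM_cont2 _ _).intervalIntegrable _ _)]
  have : MM (p + 1) x 1 = 0 := by
    have : |x - 1| = -(x - 1) := abs_of_nonpos (by linarith)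
    simp only [MM, this]
    ring
  rw [this]; ring

lemma prim_cont {F : ℝ → ℝ} (hF : Continuous F) (a : ℝ) : Continuous (fun y => ∫ x in a..y, F x) :=
  intervalIntegral.continuous_primitive (fun _ _ => hF.intervalIntegrable _ _) a

lemma prim_cont' {F : ℝ → ℝ} (hF : Continuous F) (a : ℝ) : Continuous (fun y => ∫ x in y..a, F x) := by
  simp_rw [intervalIntegral.integral_symm a]
  exact (prim_cont hF a).neg

noncomputable def BB (p : ℕ) (F : ℝ → ℝ) (y : ℝ) : ℝ := ∫ x in (0:ℝ)..1, F x * MM p x y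

lemma BB_cont (m : ℕ) {F : ℝ → ℝ} (hF : Continuous F) : Continuous (BB m F) := by
  unfold BB
  apply intervalIntegral.continuous_parametric_intervalIntegral_of_continuous'
  have := MM_cont m
  have h2 : Continuous (fun p : ℝ × ℝ => MM m p.2 p.1) := this.comp (continuous_snd.prodMk continuous_fst)
  exact (hF.comp continuous_snd).mul h2

lemma step_A (p : ℕ) {F : ℝ → ℝ} (hF : Continuous F) (y : ℝ) :
    ∫ z in (0:ℝ)..y, (AA (p + 2) F z + BB p F z) = AA (p + 3) F y := by
  have e : ∀ z, AA (p + 2) F z + BB p F z = ∫ x in (0:ℝ)..1, F x * (KK (p + 2) x z + MM p x z) := by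
    intro z
    unfold AA BB
    rw [← intervalIntegral.integral_add]
    · simp_rw [mul_add]
    · exact (hF.mul (KK_cont1 _ _)).intervalIntegrable _ _
    · have : Continuous (fun x => MM p x z) := by unfold MM; fun_prop
      exact (hF.mul this).intervalIntegrable _ _
  simp_rw [e]
  rw [swap_int]
  · unfold AA
    apply intervalIntegral.integral_congr
    intro x hx
    rw [Set.uIcc_of_le zero_le_one] at hx
    simp only [intervalIntegral.integral_const_mul]
    rw [int_A p hx.1]
  · have h1 := KK_cont (p + 2)
    have h2 := MM_cont p
    exact (hF.comp continuous_snd).mul ((h1.comp (continuous_snd.prodMk continuous_fst)).add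
      (h2.comp (continuous_snd.prodMk continuous_fst)))

lemma step_B (p : ℕ) {F : ℝ → ℝ} (hF : Continuous F) (y : ℝ) :
    ∫ z in y..(1:ℝ), BB p F z = BB (p + 1) F y := by
  unfold BB
  rw [swap_int]
  · apply intervalIntegral.integral_congr
    intro x hx
    rw [Set.uIcc_of_le zero_le_one] at hx
    simp only [intervalIntegral.integral_const_mul]
    rw [int_B p hx.2]
  · have h2 := MM_cont p
    exact (hF.comp continuous_snd).mul 
      (h2.comp (continuous_snd.prodMk continuous_fst))

lemma first_A {F : ℝ → ℝ} (hF : Continuous F) {y : ℝ} (hy0 : 0 ≤ y) (hy1 : y ≤ 1) :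
    ∫ z in (0:ℝ)..y, (∫ x in z..1, F x) = AA 2 F y := by
  have hG : ∀ z, HasDerivAt (fun z => ∫ x in (1:ℝ)..z, F x) (F z) z := fun z =>
    intervalIntegral.integral_hasDerivAt_right (hF.intervalIntegrable _ _)
      hF.stronglyMeasurable.stronglyMeasurableAtFilter hF.continuousAt
  have hGc := prim_cont hF 1
  have hg : ∀ z, HasDerivAt (fun z => ∫ t in (0:ℝ)..z, ∫ x in (1:ℝ)..t, F x) (∫ x in (1:ℝ)..z, F x) z := fun z =>
    intervalIntegral.integral_hasDerivAt_right (hGc.intervalIntegrable _ _)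
      hGc.stronglyMeasurable.stronglyMeasurableAtFilter hGc.continuousAt
  have := green hF hg hG hy0 hy1
  simp only [intervalIntegral.integral_same, mul_zero, add_zero, zero_sub] at this
  have e : AA 2 F y = ∫ z in (0:ℝ)..1, min y z * F z := by
    unfold AA
    congr 1; ext x; rw [KK_two, min_comm]; ring
  rw [e, this, ← intervalIntegral.integral_neg]
  congr 1; ext z; rw [intervalIntegral.integral_symm]

lemma first_B {F : ℝ → ℝ} (hF : Continuous F) {y : ℝ} (hy0 : 0 ≤ y) (hy1 : y ≤ 1) :
    ∫ z in y..1, (∫ x in z..1, F x) = BB 0 F y := by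
  have hc := prim_cont' hF 1
  have h := intervalIntegral.integral_add_adjacent_intervals (hc.intervalIntegrable (μ := MeasureTheory.volume) 0 y)
    (hc.intervalIntegrable y 1)
  rw [first_A hF hy0 hy1, first_A hF zero_le_one le_rfl] at h
  have h2 : AA 2 F y + BB 0 F y = AA 2 F 1 := by
    unfold AA BB
    rw [← intervalIntegral.integral_add]
    · apply intervalIntegral.integral_congr
      intro x hx
      rw [Set.uIcc_of_le zero_le_one] at hx
      simp only [KK_two, MM]
      rcases le_total x y with h | h
      · rw [min_eq_left h, min_eq_left hx.2, abs_of_nonpos (by linarith)]; simp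
      · rw [min_eq_right h, min_eq_left hx.2, abs_of_nonneg (by linarith)]; simp; ring
    · exact (hF.mul (KK_cont1 _ _)).intervalIntegrable _ _
    · have : Continuous (fun x => MM 0 x y) := by unfold MM; fun_prop
      exact (hF.mul this).intervalIntegrable _ _
  linarith

noncomputable def st (S : Finset ℕ) : ℕ → (ℝ → ℝ) × (ℝ → ℝ)
  | 0 => (fun _ => 0, fun _ => 1)
  | n + 1 => if n + 1 ∈ S then (fun _ => 0, fun y => ∫ x in y..1, (st S n).1 x)
      else (fun y => ∫ x in (0:ℝ)..y, ((st S n).1 x + (st S n).2 x), fun y => ∫ x in y..1, (st S n).2 x)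

lemma st_cont (S : Finset ℕ) (n : ℕ) : Continuous (st S n).1 ∧ Continuous (st S n).2 := by
  induction n with
  | zero => exact ⟨continuous_const, continuous_const⟩
  | succ n ih =>
    unfold st
    split_ifs
    · exact ⟨continuous_const, prim_cont' ih.1 1⟩
    · exact ⟨prim_cont (ih.1.add ih.2) 0, prim_cont' ih.2 1⟩

lemma int_congr01 {f g : ℝ → ℝ} (h : ∀ x ∈ Set.Icc (0:ℝ) 1, f x = g x) {a b : ℝ} (ha : a ∈ Set.Icc (0:ℝ) 1)
    (hb : b ∈ Set.Icc (0:ℝ) 1) : ∫ x in a..b, f x = ∫ x in a..b, g x :=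
  intervalIntegral.integral_congr (fun x hx => h x (Set.uIcc_subset_Icc ha hb hx))

lemma st_first (S : Finset ℕ) (p : ℕ) (h : ∀ k, 1 ≤ k → k ≤ p + 1 → k ∉ S) :
    ∀ y ∈ Set.Icc (0:ℝ) 1, (st S (p + 1)).1 y = KK (p + 2) 1 y ∧ (st S (p + 1)).2 y = MM p 1 y := by
  induction p with
  | zero =>
    intro y hy
    have : 0 + 1 ∉ S := h 1 le_rfl (by simp)
    rw [st, if_neg this]
    simp only [st]
    simp [KK_two, MM, hy.2]
    rw [abs_of_nonneg (by linarith [hy.2])]; ring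
  | succ p ih =>
    have ih := ih (fun k h1 h2 => h k h1 (by omega))
    have : (p + 1) + 1 ∉ S := h (p + 2) (by omega) (by omega)
    intro y hy
    rw [st, if_neg this]
    constructor
    · rw [← int_A p zero_le_one y]
      exact int_congr01 (fun x hx => by rw [(ih x hx).1, (ih x hx).2]) (by simp) hy
    · rw [← int_B p le_rfl y]
      exact int_congr01 (fun x hx => (ih x hx).2) hy (by simp)

lemma st_next (S : Finset ℕ) (n : ℕ) (hn : n + 1 ∈ S) (p : ℕ)
    (h : ∀ k, n + 2 ≤ k → k ≤ n + p + 2 → k ∉ S) :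
    ∀ y ∈ Set.Icc (0:ℝ) 1, (st S (n + p + 2)).1 y = AA (p + 2) (st S n).1 y ∧
      (st S (n + p + 2)).2 y = BB p (st S n).1 y := by
  have hF := (st_cont S n).1
  induction p with
  | zero =>
    intro y hy
    have h1 : (n + 1) + 1 ∉ S := h _ (by omega) (by omega)
    rw [show n + 0 + 2 = (n + 1) + 1 from rfl, st, if_neg h1, st, if_pos hn]
    simp only [zero_add]
    exact ⟨first_A hF hy.1 hy.2, first_B hF hy.1 hy.2⟩
  | succ p ih =>
    have ih := ih (fun k h1 h2 => h k h1 (by omega))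
    have h1 : (n + p + 2) + 1 ∉ S := h _ (by omega) (by omega)
    intro y hy
    rw [show n + (p + 1) + 2 = (n + p + 2) + 1 by ring, st, if_neg h1]
    constructor
    · rw [← step_A p hF y]
      exact int_congr01 (fun x hx => by rw [(ih x hx).1, (ih x hx).2]) (by simp) hy
    · rw [← step_B p hF y]
      exact int_congr01 (fun x hx => (ih x hx).2) hy (by simp)

/-- one whole part, started at a peak at position `n + 1`, of size `m` -/
lemma st_part (S : Finset ℕ) (n : ℕ) (hn : n + 1 ∈ S) (m : ℕ) (hm : 1 ≤ m)
    (h : ∀ k, n + 1 < k → k < n + 1 + m → k ∉ S) :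
    ∀ y ∈ Set.Icc (0:ℝ) 1, (st S (n + m)).1 y = AA m (st S n).1 y := by
  obtain rfl | ⟨p, rfl⟩ : m = 1 ∨ ∃ p, m = p + 2 := by
    rcases Nat.lt_or_ge m 2 with h | h
    · left; omega
    · right; exact ⟨m - 2, by omega⟩
  · intro y _
    rw [st, if_pos hn, AA_one]
  · intro y hy
    exact (st_next S n hn p (fun k h1 h2 => h k (by omega) (by omega)) y hy).1

lemma st_part0 (S : Finset ℕ) (m : ℕ)
    (h : ∀ k, 1 ≤ k → k < m + 1 → k ∉ S) :
    ∀ y ∈ Set.Icc (0:ℝ) 1, (st S m).1 y = KK (m + 1) 1 y := by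
  cases m with
  | zero => intro y _; simp [st, KK_one]
  | succ p =>
    intro y hy
    exact (st_first S p (fun k h1 h2 => h k (by omega) (by omega)) y hy).1

end Part4

section Part5

def HS (S : Finset ℕ) (s : ℕ) (v : List ℕ) : Prop :=
  ∀ k, s < k → (k ∈ S ↔ ∃ u w, v = u ++ w ∧ u ≠ [] ∧ w ≠ [] ∧ s + u.sum = k)

lemma HS_single {S : Finset ℕ} {s l : ℕ} (h : HS S s [l]) (k : ℕ) (hk : s < k) : k ∉ S := by
  rw [h k hk]
  rintro ⟨u, w, h1, h2, h3, _⟩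
  have := congrArg List.length h1
  have a := List.length_pos_iff.2 h2
  have b := List.length_pos_iff.2 h3
  simp at this
  omega

lemma HS_mem {S : Finset ℕ} {s a : ℕ} {v : List ℕ} (ha : 0 < a) (hv : v ≠ []) (h : HS S s (a :: v)) : s + a ∈ S := by
  rw [h _ (by omega)]
  exact ⟨[a], v, rfl, by simp, hv, by simp⟩

lemma HS_not {S : Finset ℕ} {s a : ℕ} {v : List ℕ} (h : HS S s (a :: v)) (k : ℕ) (h1 : s < k) (h2 : k < s + a) :
    k ∉ S := by
  rw [h _ h1]
  rintro ⟨u, w, e, hu, hw, hs⟩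
  cases u with
  | nil => exact hu rfl
  | cons b u =>
    simp at e hs
    omega

lemma HS_tail {S : Finset ℕ} {s a : ℕ} {v : List ℕ} (h : HS S s (a :: v)) : HS S (s + a) v := by
  intro k hk
  rw [h k (by omega)]
  constructor
  · rintro ⟨u, w, e, hu, hw, hs⟩
    cases u with
    | nil => exact absurd rfl hu
    | cons b u =>
      simp at e hs
      refine ⟨u, w, e.2, ?_, hw, by omega⟩
      rintro rfl
      simp at hs
      omega
  · rintro ⟨u, w, rfl, hu, hw, hs⟩
    exact ⟨a :: u, w, rfl, by simp, hw, by simp; omega⟩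

lemma HS_comp (c : List ℕ) : HS (compPeaks c) 0 c := by
  intro k hk
  simp only [compPeaks, Finset.mem_image, Finset.mem_range, zero_add]
  constructor
  · rintro ⟨i, hi, rfl⟩
    refine ⟨c.take (i + 1), c.drop (i + 1), (List.take_append_drop _ _).symm, ?_, ?_, rfl⟩
    · intro h
      have := congrArg List.length h
      simp at this
      subst this
      simp at hi
    · intro h
      have := congrArg List.length h
      simp at this
      omega
  · rintro ⟨u, w, rfl, hu, hw, rfl⟩
    have a := List.length_pos_iff.2 hu
    have b := List.length_pos_iff.2 hw
    refine ⟨u.length - 1, ?_, ?_⟩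
    · simp; omega
    · rw [Nat.sub_add_cancel a]; simp

lemma st_run (S : Finset ℕ) (u : List ℕ) : ∀ (l n : ℕ) (G : ℝ → ℝ), (∀ x ∈ u ++ [l], 0 < x) → n + 1 ∈ S →
    HS S (n + 1) (u ++ [l]) → (∀ x ∈ Set.Icc (0:ℝ) 1, (st S n).1 x = G x) →
    (st S (n + (u ++ [l]).sum + 1)).1 1 = run G (u ++ [l + 1]) 1 := by
  induction u with
  | nil =>
    intro l n G hpos hn hS hG
    have := st_part S n hn (l + 1) (by omega) (fun k h1 h2 => HS_single hS k h1) 1 (by simp)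
    simp only [List.nil_append, List.sum_cons, List.sum_nil, add_zero, run_cons, run_nil]
    rw [← AA_congr (l + 1) hG, ← this]
    rfl
  | cons a u ih =>
    intro l n G hpos hn hS hG
    have ha : 0 < a := hpos a (by simp)
    have hp := st_part S n hn a ha (fun k h1 h2 => HS_not hS k h1 h2)
    have hm := HS_mem ha (by simp) hS
    have := ih l (n + a) (AA a G) (fun x hx => hpos x (by simp at hx ⊢; tauto))
      (by rwa [show n + a + 1 = n + 1 + a by ring])
      (by rw [show n + a + 1 = n + 1 + a by ring]; exact HS_tail hS)
      (by rw [← AA_congr a hG]; exact hp)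
    rw [List.cons_append, List.cons_append, run_cons, ← this, List.sum_cons, ← add_assoc]

lemma st_QQ (u : List ℕ) (l : ℕ) (hpos : ∀ x ∈ u ++ [l], 0 < x) :
    (st (compPeaks (u ++ [l])) (u ++ [l]).sum).1 1 = QQ (u ++ [l + 1]) := by
  have hS := HS_comp (u ++ [l])
  generalize compPeaks (u ++ [l]) = S at *
  cases u with
  | nil =>
    have := st_part0 S l (fun k h1 h2 => HS_single hS k h1) 1 (by simp)
    simpa [QQ, run_nil] using this
  | cons a u =>
    have ha : 0 < a := hpos a (by simp)
    obtain ⟨n, rfl⟩ : ∃ n, a = n + 1 := ⟨a - 1, by omega⟩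
    have hp := st_part0 S n (fun k h1 h2 => HS_not hS k h1 (by omega))
    have hm := HS_mem ha (by simp) hS
    have := st_run S u l n (KK (n + 1) 1) (fun x hx => hpos x (by simp at hx ⊢; tauto))
      (by simpa using hm) (by simpa using HS_tail hS) hp
    simp only [List.cons_append, QQ, List.sum_cons]
    rw [← this, show n + 1 + (u ++ [l]).sum = n + (u ++ [l]).sum + 1 by ring]

end Part5

section Part6

noncomputable def bb (n j : ℕ) (y : ℝ) : ℝ :=
  y ^ j * (1 - y) ^ (n - j) / ((j.factorial : ℝ) * ((n - j).factorial : ℝ))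

lemma bb_cont (n j : ℕ) : Continuous (bb n j) := by unfold bb; fun_prop

lemma bb_deriv (j k : ℕ) (y : ℝ) :
    HasDerivAt (bb (j + k + 2) (j + 1)) (bb (j + k + 1) j y - bb (j + k + 1) (j + 1) y) y := by
  have h1 : HasDerivAt (fun y : ℝ => y ^ (j + 1)) ((j + 1) * y ^ j) y := by
    simpa using hasDerivAt_pow (j + 1) y
  have h2 : HasDerivAt (fun y : ℝ => (1 - y) ^ (k + 1)) (-((k + 1) * (1 - y) ^ k)) y := by
    refine HasDerivAt.congr_deriv (((hasDerivAt_id y).const_sub 1).pow (k + 1)) ?_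
    simp
  have h := (h1.mul h2).div_const (((j + 1).factorial : ℝ) * ((k + 1).factorial : ℝ))
  have e1 : j + k + 2 - (j + 1) = k + 1 := by omega
  have e2 : j + k + 1 - j = k + 1 := by omega
  have e3 : j + k + 1 - (j + 1) = k := by omega
  have e : bb (j + k + 2) (j + 1) = fun y => y ^ (j + 1) * (1 - y) ^ (k + 1) / (((j + 1).factorial : ℝ) * ((k + 1).factorial : ℝ)) := by
    ext y; rw [bb, e1]
  rw [e]
  refine HasDerivAt.congr_deriv h ?_
  simp only [bb, e2, e3]
  have f1 : (j.factorial : ℝ) ≠ 0 := by positivity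
  have f2 : (k.factorial : ℝ) ≠ 0 := by positivity
  have f3 : (j : ℝ) + 1 ≠ 0 := by positivity
  have f4 : (k : ℝ) + 1 ≠ 0 := by positivity
  rw [Nat.factorial_succ j, Nat.factorial_succ k]
  push_cast
  field_simp
  ring

lemma sum_ite_lt (f : ℕ → ℝ) (N j : ℕ) (h : j + 1 < N) :
    ∑ p ∈ Finset.range N, (if j < p then f p else 0) =
      f (j + 1) + ∑ p ∈ Finset.range N, (if j + 1 < p then f p else 0) := by
  have : f (j + 1) = ∑ p ∈ Finset.range N, (if p = j + 1 then f p else 0) := by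
    rw [Finset.sum_ite_eq' (Finset.range N) (j + 1) f, if_pos (Finset.mem_range.2 h)]
  rw [this, ← Finset.sum_add_distrib]
  apply Finset.sum_congr rfl
  intro p _
  split_ifs <;> first | omega | simp

lemma sum_ite_ge (f : ℕ → ℝ) (N j : ℕ) (h : j + 1 < N) :
    ∑ p ∈ Finset.range N, (if ¬ j + 1 < p then f p else 0) =
      f (j + 1) + ∑ p ∈ Finset.range N, (if ¬ j < p then f p else 0) := by
  have : f (j + 1) = ∑ p ∈ Finset.range N, (if p = j + 1 then f p else 0) := by
    rw [Finset.sum_ite_eq' (Finset.range N) (j + 1) f, if_pos (Finset.mem_range.2 h)]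
  rw [this, ← Finset.sum_add_distrib]
  apply Finset.sum_congr rfl
  intro p _
  split_ifs <;> first | omega | simp

lemma int_bb_lo (k : ℕ) : ∀ (j : ℕ) (y : ℝ), ∫ x in (0:ℝ)..y, bb (j + k) j x =
    ∑ p ∈ Finset.range (j + k + 2), (if j < p then bb (j + k + 1) p y else 0) := by
  induction k with
  | zero =>
    intro j y
    have hd : ∀ x ∈ Set.uIcc 0 y, HasDerivAt (bb (j + 1) (j + 1)) (bb (j + 0) j x) x := by
      intro x _
      have h1 : HasDerivAt (fun y : ℝ => y ^ (j + 1)) ((j + 1) * x ^ j) x := by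
        simpa using hasDerivAt_pow (j + 1) x
      have h := h1.div_const ((j + 1).factorial : ℝ)
      have e : bb (j + 1) (j + 1) = fun y => y ^ (j + 1) / ((j + 1).factorial : ℝ) := by
        ext y; simp [bb]
      rw [e]
      refine HasDerivAt.congr_deriv h ?_
      have f1 : (j.factorial : ℝ) ≠ 0 := by positivity
      have f3 : (j : ℝ) + 1 ≠ 0 := by positivity
      simp [bb, Nat.factorial_succ]
      field_simp
    rw [intervalIntegral.integral_eq_sub_of_hasDerivAt hd ((bb_cont _ _).intervalIntegrable _ _)]
    have h0 : bb (j + 1) (j + 1) 0 = 0 := by simp [bb]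
    rw [sum_ite_lt _ _ _ (by omega), h0, Finset.sum_eq_zero]
    · simp
    · intro p hp
      rw [Finset.mem_range] at hp
      rw [if_neg (by omega)]
  | succ k ih =>
    intro j y
    have h := intervalIntegral.integral_eq_sub_of_hasDerivAt (a := 0) (b := y) (fun x _ => bb_deriv j k x)
      (((bb_cont _ _).sub (bb_cont _ _)).intervalIntegrable _ _)
    rw [intervalIntegral.integral_sub ((bb_cont _ _).intervalIntegrable _ _) ((bb_cont _ _).intervalIntegrable _ _)] at h
    have h0 : bb (j + k + 2) (j + 1) 0 = 0 := by simp [bb]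
    have := ih (j + 1) y
    rw [show j + 1 + k = j + k + 1 by ring] at this
    rw [sum_ite_lt _ _ _ (by omega), show j + (k + 1) = j + k + 1 by ring, ← this]
    rw [show j + k + 1 + 1 = j + k + 2 from rfl]
    linarith

lemma int_bb_hi (j : ℕ) : ∀ (k : ℕ) (y : ℝ), ∫ x in y..1, bb (j + k) j x =
    ∑ p ∈ Finset.range (j + k + 2), (if ¬ j < p then bb (j + k + 1) p y else 0) := by
  induction j with
  | zero =>
    intro k y
    have hd : ∀ x ∈ Set.uIcc y 1, HasDerivAt (fun x => - bb (k + 1) 0 x) (bb (0 + k) 0 x) x := by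
      intro x _
      have h2 : HasDerivAt (fun y : ℝ => (1 - y) ^ (k + 1)) (-((k + 1) * (1 - x) ^ k)) x := by
        refine HasDerivAt.congr_deriv (((hasDerivAt_id x).const_sub 1).pow (k + 1)) ?_
        simp
      have h := (h2.div_const ((k + 1).factorial : ℝ)).neg
      have e : (fun x => - bb (k + 1) 0 x) = fun y => -((1 - y) ^ (k + 1) / ((k + 1).factorial : ℝ)) := by
        ext y; simp [bb]
      rw [e]
      refine HasDerivAt.congr_deriv h ?_
      have f1 : (k.factorial : ℝ) ≠ 0 := by positivity
      have f3 : (k : ℝ) + 1 ≠ 0 := by positivity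
      simp [bb, Nat.factorial_succ]
      field_simp
    rw [intervalIntegral.integral_eq_sub_of_hasDerivAt hd ((bb_cont _ _).intervalIntegrable _ _)]
    have h0 : bb (k + 1) 0 1 = 0 := by simp [bb]
    rw [Finset.sum_eq_single 0]
    · simp [h0]
    · intro p _ hp
      rw [if_neg (by omega)]
    · simp
  | succ j ih =>
    intro k y
    have h := intervalIntegral.integral_eq_sub_of_hasDerivAt (a := y) (b := 1) (fun x _ => bb_deriv j k x)
      (((bb_cont _ _).sub (bb_cont _ _)).intervalIntegrable _ _)
    rw [intervalIntegral.integral_sub ((bb_cont _ _).intervalIntegrable _ _) ((bb_cont _ _).intervalIntegrable _ _)] at h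
    have h0 : bb (j + k + 2) (j + 1) 1 = 0 := by simp [bb]; omega
    have := ih (k + 1) y
    rw [show j + (k + 1) = j + k + 1 by ring] at this
    rw [show j + 1 + k = j + k + 1 by ring, sum_ite_ge _ _ _ (by omega), ← this]
    rw [show j + k + 1 + 1 = j + k + 2 from rfl]
    linarith

lemma bb_lo (n : ℕ) (j : Fin (n + 1)) (y : ℝ) : ∫ x in (0:ℝ)..y, bb n j x =
    ∑ p : Fin (n + 2), (if j.castSucc < p then bb (n + 1) p y else 0) := by
  have := int_bb_lo (n - j) j y
  rw [show (j : ℕ) + (n - j) = n by omega] at this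
  rw [this, ← Fin.sum_univ_eq_sum_range (fun p => if (j : ℕ) < p then bb (n + 1) p y else 0)]
  rfl

lemma bb_hi (n : ℕ) (j : Fin (n + 1)) (y : ℝ) : ∫ x in y..1, bb n j x =
    ∑ p : Fin (n + 2), (if ¬ j.castSucc < p then bb (n + 1) p y else 0) := by
  have := int_bb_hi j (n - j) y
  rw [show (j : ℕ) + (n - j) = n by omega] at this
  rw [this, ← Fin.sum_univ_eq_sum_range (fun p => if ¬ (j : ℕ) < p then bb (n + 1) p y else 0)]
  rfl

lemma bb_total (n : ℕ) (j : Fin (n + 1)) : ∫ x in (0:ℝ)..1, bb n j x = 1 / ((n + 1).factorial : ℝ) := by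
  rw [bb_lo, Finset.sum_eq_single (Fin.last (n + 1))]
  · rw [if_pos (Fin.castSucc_lt_last j)]
    simp [bb]
  · intro p _ hp
    have : (p : ℕ) < n + 1 := by
      have := Fin.lt_last_iff_ne_last.2 hp
      exact this
    have h0 : bb (n + 1) p 1 = 0 := by simp [bb]; omega
    rw [h0]; simp
  · simp

/-- extension of a permutation by a last value -/
def extp {n : ℕ} (p : Fin (n + 2)) (τ : Equiv.Perm (Fin (n + 1))) : Equiv.Perm (Fin (n + 2)) :=
  ((finSuccEquiv' (Fin.last (n + 1))).trans (Equiv.optionCongr τ)).trans (finSuccEquiv' p).symm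

lemma extp_last {n : ℕ} (p : Fin (n + 2)) (τ : Equiv.Perm (Fin (n + 1))) : extp p τ (Fin.last (n + 1)) = p := by
  simp [extp]

lemma extp_cast {n : ℕ} (p : Fin (n + 2)) (τ : Equiv.Perm (Fin (n + 1))) (i : Fin (n + 1)) :
    extp p τ i.castSucc = p.succAbove (τ i) := by
  have : finSuccEquiv' (Fin.last (n + 1)) i.castSucc = some i := by
    rw [← Fin.succAbove_last, finSuccEquiv'_succAbove]
  simp [extp, this]

lemma extp_bij (n : ℕ) : Function.Bijective (fun q : Fin (n + 2) × Equiv.Perm (Fin (n + 1)) => extp q.1 q.2) := by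
  rw [Fintype.bijective_iff_injective_and_card]
  constructor
  · rintro ⟨p, τ⟩ ⟨p', τ'⟩ h
    simp only at h
    have h1 : p = p' := by
      have := congrArg (fun σ => σ (Fin.last (n + 1))) h
      simpa [extp_last] using this
    subst h1
    have h2 : τ = τ' := by
      ext1 i
      have := congrArg (fun σ => σ i.castSucc) h
      simp only [extp_cast] at this
      exact Fin.succAbove_right_injective this
    rw [h2]
  · simp [Fintype.card_perm, Nat.factorial_succ (n + 1)]

lemma sum_extp {n : ℕ} (f : Equiv.Perm (Fin (n + 2)) → ℝ) :
    ∑ σ, f σ = ∑ τ : Equiv.Perm (Fin (n + 1)), ∑ p : Fin (n + 2), f (extp p τ) := by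
  rw [← (extp_bij n).sum_comp f, Fintype.sum_prod_type, Finset.sum_comm]

def Up {n : ℕ} (σ : Equiv.Perm (Fin (n + 1))) : Prop :=
  ∃ h : 1 ≤ n, σ ⟨n - 1, by omega⟩ < σ (Fin.last n)

def good (S : Finset ℕ) {n : ℕ} (σ : Equiv.Perm (Fin (n + 1))) : Prop :=
  ∀ i < n + 1, (IsPeak σ i ↔ i ∈ S)

lemma Up_extp {n : ℕ} (p : Fin (n + 2)) (τ : Equiv.Perm (Fin (n + 1))) :
    Up (extp p τ) ↔ (τ (Fin.last n)).castSucc < p := by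
  have e : (⟨n + 1 - 1, by omega⟩ : Fin (n + 2)) = (Fin.last n).castSucc := rfl
  simp only [Up, extp_last, e, extp_cast, Fin.succAbove_lt_iff_castSucc_lt]
  simp

lemma peak_old {n : ℕ} (p : Fin (n + 2)) (τ : Equiv.Perm (Fin (n + 1))) (i : ℕ) (hi : i < n + 1) :
    IsPeak (extp p τ) i ↔ IsPeak τ i := by
  have e : ∀ k (hk : k < n + 1), extp p τ ⟨k, by omega⟩ = p.succAbove (τ ⟨k, hk⟩) := fun k hk =>
    extp_cast p τ ⟨k, hk⟩
  constructor
  · rintro ⟨h2, h3, h⟩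
    refine ⟨h2, hi, ?_⟩
    rw [e _ (by omega), e _ (by omega), e _ (by omega)] at h
    simpa only [Fin.succAbove_lt_succAbove_iff] using h
  · rintro ⟨h2, h3, h⟩
    refine ⟨h2, by omega, ?_⟩
    rw [e _ (by omega), e _ (by omega), e _ (by omega)]
    simpa only [Fin.succAbove_lt_succAbove_iff] using h

lemma peak_new {n : ℕ} (p : Fin (n + 2)) (τ : Equiv.Perm (Fin (n + 1))) :
    IsPeak (extp p τ) (n + 1) ↔ Up τ ∧ ¬ Up (extp p τ) := by
  have e : ∀ k (hk : k < n + 1), extp p τ ⟨k, by omega⟩ = p.succAbove (τ ⟨k, hk⟩) := fun k hk =>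
    extp_cast p τ ⟨k, hk⟩
  have el : extp p τ ⟨n + 1, by omega⟩ = p := extp_last p τ
  have ho : ∀ j : Fin (n + 1), p < p.succAbove j ↔ ¬ j.castSucc < p := by
    intro j
    rw [Fin.lt_succAbove_iff_le_castSucc, not_lt]
  rw [Up_extp]
  constructor
  · rintro ⟨h2, h3, h, h'⟩
    rw [el, e _ (by omega), ho] at h'
    rw [e _ (by omega), e _ (by omega), Fin.succAbove_lt_succAbove_iff] at h
    exact ⟨⟨by omega, h⟩, h'⟩
  · rintro ⟨⟨h1, h⟩, h'⟩
    refine ⟨by omega, by omega, ?_, ?_⟩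
    · rw [e _ (by omega), e _ (by omega), Fin.succAbove_lt_succAbove_iff]
      exact h
    · rw [el, e _ (by omega), ho]
      exact h'

lemma good_extp (S : Finset ℕ) {n : ℕ} (p : Fin (n + 2)) (τ : Equiv.Perm (Fin (n + 1))) :
    good S (extp p τ) ↔ good S τ ∧ ((Up τ ∧ ¬ Up (extp p τ)) ↔ n + 1 ∈ S) := by
  rw [← peak_new]
  constructor
  · intro h
    refine ⟨fun i hi => ?_, h _ (by omega)⟩
    rw [← peak_old p τ i hi]
    exact h i (by omega)
  · rintro ⟨h1, h2⟩ i hi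
    rcases Nat.lt_or_ge i (n + 1) with h | h
    · rw [peak_old p τ i h]; exact h1 i h
    · obtain rfl : i = n + 1 := by omega
      exact h2

open Classical in
noncomputable def ww {n : ℕ} (Q : Equiv.Perm (Fin (n + 1)) → Prop) (y : ℝ) : ℝ :=
  ∑ σ, if Q σ then bb n (σ (Fin.last n)) y else 0

lemma ww_cont {n : ℕ} (Q : Equiv.Perm (Fin (n + 1)) → Prop) : Continuous (ww Q) := by
  unfold ww
  refine continuous_finset_sum _ (fun σ _ => ?_)
  split_ifs
  · exact bb_cont _ _
  · exact continuous_const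

open Classical in
lemma ww_int {n : ℕ} (Q : Equiv.Perm (Fin (n + 1)) → Prop) (a b : ℝ) :
    ∫ x in a..b, ww Q x = ∑ σ, if Q σ then ∫ x in a..b, bb n (σ (Fin.last n)) x else 0 := by
  unfold ww
  rw [intervalIntegral.integral_finset_sum]
  · apply Finset.sum_congr rfl
    intro σ _
    split_ifs <;> simp
  · intro σ _
    split_ifs
    · exact (bb_cont _ _).intervalIntegrable _ _
    · simp

open Classical in
lemma ww_lo {n : ℕ} (Q : Equiv.Perm (Fin (n + 1)) → Prop) (Q' : Equiv.Perm (Fin (n + 2)) → Prop)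
    (h : ∀ p τ, Q' (extp p τ) ↔ Q τ ∧ Up (extp p τ)) (y : ℝ) :
    ww Q' y = ∫ x in (0:ℝ)..y, ww Q x := by
  rw [ww_int]
  unfold ww
  rw [sum_extp]
  apply Finset.sum_congr rfl
  intro τ _
  simp only [h, extp_last, Up_extp]
  by_cases hq : Q τ
  · simp [hq, bb_lo]
  · simp [hq]

open Classical in
lemma ww_hi {n : ℕ} (Q : Equiv.Perm (Fin (n + 1)) → Prop) (Q' : Equiv.Perm (Fin (n + 2)) → Prop)
    (h : ∀ p τ, Q' (extp p τ) ↔ Q τ ∧ ¬ Up (extp p τ)) (y : ℝ) :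
    ww Q' y = ∫ x in y..1, ww Q x := by
  rw [ww_int]
  unfold ww
  rw [sum_extp]
  apply Finset.sum_congr rfl
  intro τ _
  simp only [h, extp_last, Up_extp]
  by_cases hq : Q τ
  · simp only [hq, bb_hi, true_and, if_true]
  · simp [hq]

lemma ww_add {n : ℕ} (S : Finset ℕ) (y : ℝ) :
    ww (fun σ : Equiv.Perm (Fin (n + 1)) => good S σ ∧ Up σ) y + ww (fun σ : Equiv.Perm (Fin (n + 1)) => good S σ ∧ ¬ Up σ) y =
    ww (fun σ : Equiv.Perm (Fin (n + 1)) => good S σ) y := by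
  unfold ww
  rw [← Finset.sum_add_distrib]
  apply Finset.sum_congr rfl
  intro σ _
  by_cases h1 : good S σ <;> by_cases h2 : Up σ <;> simp [h1, h2]

lemma st_count (S : Finset ℕ) (h0 : 0 ∉ S) (n : ℕ) :
    (st S n).1 = ww (fun σ : Equiv.Perm (Fin (n + 1)) => good S σ ∧ Up σ) ∧
    (st S n).2 = ww (fun σ : Equiv.Perm (Fin (n + 1)) => good S σ ∧ ¬ Up σ) := by
  induction n with
  | zero =>
    have hU : ∀ σ : Equiv.Perm (Fin (0 + 1)), ¬ Up σ := by rintro σ ⟨h, _⟩; omega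
    have hg : ∀ σ : Equiv.Perm (Fin (0 + 1)), good S σ := by
      intro σ i hi
      obtain rfl : i = 0 := by omega
      refine ⟨?_, fun h => absurd h h0⟩
      rintro ⟨h, _⟩; omega
    constructor
    · ext y; simp [st, ww, hU]
    · ext y; simp [st, ww, hU, hg, bb]
  | succ n ih =>
    rw [st]
    split_ifs with hS
    · constructor
      · ext y
        rw [ww, Finset.sum_eq_zero]
        intro σ _
        obtain ⟨⟨p, τ⟩, rfl⟩ := (extp_bij n).2 σ
        rw [if_neg]
        rintro ⟨h1, h2⟩
        rw [good_extp] at h1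
        exact (h1.2.2 hS).2 h2
      · ext y
        simp only [ih.1]
        rw [ww_hi _ _ ?_ y]
        intro p τ
        rw [good_extp]
        tauto
    · constructor
      · ext y
        simp only [ih.1, ih.2, ww_add]
        rw [ww_lo _ _ ?_ y]
        intro p τ
        rw [good_extp]
        tauto
      · ext y
        simp only [ih.2]
        rw [ww_hi _ _ ?_ y]
        intro p τ
        rw [good_extp]
        tauto

open Classical in
lemma count_eq (S : Finset ℕ) (n : ℕ) (h0 : 0 ∉ S) (hS : ∀ i ∈ S, i < n + 1) :
    (numPeakSet (n + 1) S : ℝ) = ((n + 1).factorial : ℝ) * (st S (n + 1)).1 1 := by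
  have hn : n + 1 ∉ S := fun h => by have := hS _ h; omega
  rw [st, if_neg hn]
  obtain ⟨e1, e2⟩ := st_count S h0 n
  simp only [e1, e2, ww_add, ww_int, bb_total]
  have hg : ∀ σ : Equiv.Perm (Fin (n + 1)), peakSet σ = S ↔ good S σ := by
    intro σ
    constructor
    · rintro rfl i hi
      simp [peakSet]; intro _; omega
    · intro h
      ext i
      simp only [peakSet, Finset.mem_filter, Finset.mem_range]
      constructor
      · rintro ⟨a, b⟩; exact (h i a).1 b
      · intro a; exact ⟨hS i a, (h i (hS i a)).2 a⟩
  have : ((n + 1).factorial : ℝ) ≠ 0 := by positivity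
  rw [numPeakSet, Nat.card_eq_fintype_card, Fintype.card_subtype, ← Finset.sum_filter, Finset.sum_const,
    nsmul_eq_mul]
  simp only [hg]
  field_simp

lemma bridge (u : List ℕ) (l : ℕ) (hpos : ∀ x ∈ u ++ [l], 0 < x) :
    (Pcomp (u ++ [l]) : ℝ) = ((u ++ [l]).sum.factorial : ℝ) * QQ (u ++ [l + 1]) := by
  rw [← st_QQ u l hpos, Pcomp]
  have hl : 0 < l := hpos l (by simp)
  have hmem : ∀ i ∈ compPeaks (u ++ [l]), 0 < i ∧ i < (u ++ [l]).sum := by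
    intro i hi
    simp only [compPeaks, Finset.mem_image, Finset.mem_range] at hi
    obtain ⟨j, hj, rfl⟩ := hi
    have ht : ∀ t : List ℕ, t ≠ [] → (∀ x ∈ t, 0 < x) → 0 < t.sum := by
      intro t h1 h2
      cases t with
      | nil => exact absurd rfl h1
      | cons a t => have := h2 a (by simp); simp; omega
    have ha := ht ((u ++ [l]).take (j + 1)) (by simp) (fun x hx => hpos x (List.mem_of_mem_take hx))
    have hb := ht ((u ++ [l]).drop (j + 1)) (by
        intro h; have := congrArg List.length h; simp only [List.length_drop, List.length_nil] at this; omega)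
      (fun x hx => hpos x (List.mem_of_mem_drop hx))
    have := congrArg List.sum (List.take_append_drop (j + 1) (u ++ [l]))
    rw [List.sum_append] at this
    omega
  obtain ⟨n, hn⟩ : ∃ n, (u ++ [l]).sum = n + 1 := ⟨u.sum + l - 1, by simp; omega⟩
  rw [hn] at hmem ⊢
  exact count_eq _ n (fun h => absurd (hmem 0 h).1 (lt_irrefl 0)) (fun i hi => (hmem i hi).2)

end Part6

theorem canonical_form_one (n : ℕ) (c : List ℕ) (hc : IsComposition n c)
    (hlen : 3 ≤ c.length) (hmax : IsMaximal c) :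
    ∃ (k : ℕ) (x : ℕ → List ℕ), 1 ≤ k ∧ c = chain3 x k ∧
      (x 0 = [] ∨ x 0 = [4]) ∧
      (x k = [] ∨ ∃ s, 1 ≤ s ∧ x k = List.replicate s 2) ∧
      (∀ i, 0 < i → i < k →
        x i = [] ∨ (∃ s, 1 ≤ s ∧ x i = List.replicate s 2) ∨
          (∃ t, 1 ≤ t ∧ x i = List.replicate t 4)) := by
  rcases List.eq_nil_or_concat c with rfl | ⟨u, l, rfl⟩
  · simp at hlen
  simp only [List.concat_eq_append] at *
  have hpos := hc.1
  have hl : 0 < l := hpos l (by simp)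
  have key : ∀ d' : List ℕ, (∀ m ∈ d', 2 ≤ m) → d'.sum = (u ++ [l + 1]).sum → QQ d' ≤ QQ (u ++ [l + 1]) := by
    intro d' h2 hs
    rcases List.eq_nil_or_concat d' with rfl | ⟨u', l', rfl⟩
    · simp at hs
    simp only [List.concat_eq_append] at *
    have h2l := h2 l' (by simp)
    obtain ⟨m, rfl⟩ : ∃ m, l' = m + 1 := ⟨l' - 1, by omega⟩
    have hs' : (u' ++ [m]).sum = (u ++ [l]).sum := by
      simp at hs ⊢; omega
    have hp' : ∀ x ∈ u' ++ [m], 0 < x := by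
      intro x hx
      rcases List.mem_append.1 hx with h | h
      · have := h2 x (List.mem_append_left _ h); omega
      · simp at h; omega
    have h := hmax (u' ++ [m]) ⟨hp', hs'⟩
    have h' : (Pcomp (u' ++ [m]) : ℝ) ≤ (Pcomp (u ++ [l]) : ℝ) := by exact_mod_cast h
    rw [bridge u' m hp', bridge u l hpos, hs'] at h'
    exact le_of_mul_le_mul_left h' (by positivity)
  apply form_of_MaxQ
  refine ⟨?_, by simpa using hlen, key⟩
  have hQ : 0 < QQ (u ++ [l + 1]) := by
    have h2 : 2 ≤ (u ++ [l + 1]).sum := by simp; omega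
    exact lt_of_lt_of_le (QQ_pos h2) (key _ (by simpa using h2) (by simp))
  intro m hm
  have hm0 : 0 < m := by
    rcases List.mem_append.1 hm with h | h
    · exact hpos m (List.mem_append_left _ h)
    · simp at h; omega
  rcases Nat.lt_or_ge m 2 with h | h
  · obtain rfl : m = 1 := by omega
    rw [QQ_one _ hm] at hQ
    exact absurd hQ (lt_irrefl 0)
  · exact h
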